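/- Algebraic Bethe ansatz for the two-boundary transfer matrix: let M ∈ ℕ and v_1, …, v_M ∈ ℂ satisfy the genericity conditions sinh(2v_m) ≠ 0 and sinh(2v_m ± h) ≠ 0 for all m, and sinh(v_m ± v_k) ≠ 0 and sinh(v_m ± v_k ± h) ≠ 0 for all m ≠ k, together with the Bethe ansatz equations: for every 1 ≤ m ≤ M, sinh^{2N}(v_m + h/2) Δ_l(v_m) Δ_r(v_m) Π_{k≠m} sinh(v_m − v_k − h) sinh(v_m + v_k − h) = sinh^{2N}(v_m − h/2) Δ_l(−v_m) Δ_r(−v_m) Π_{k≠m} sinh(v_m − v_k + h) sinh(v_m + v_k + h). Then the Bethe vector |{v}⟩ := B(v_1) ⋯ B(v_M) |⇑⟩ satisfies, for every u ∈ ℂ with sinh(2u) ≠ 0 and sinh(u ± v_m) ≠ 0 for all m: t_{2b}(u) |{v}⟩ = Λ(u) |{v}⟩, where Λ(u) = sinh^{2N}(u + h/2) Δ_l(u) Δ_r(u) (sinh(2u+h)/sinh(2u)) Π_{m=1}^M [sinh(u−v_m−h) sinh(u+v_m−h) / (sinh(u−v_m) sinh(u+v_m))] + sinh^{2N}(u −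 h/2) Δ_l(−u) Δ_r(−u) (sinh(2u−h)/sinh(2u)) Π_{m=1}^M [sinh(u−v_m+h) sinh(u+v_m+h) / (sinh(u−v_m) sinh(u+v_m))]. -/

import Mathlib

noncomputable section

/-- Basis labels of `(ℂ²)^{⊗N}`: a state (0 = ↑, 1 = ↓) for each of the `N` sites. -/
abbrev Conf (N : ℕ) := Fin N → Fin 2

/-- The two-boundary space `H_{2b} = V_{α_l} ⊗ (ℂ²)^{⊗N} ⊗ V_{α_r}`, realised as finitely
supported complex functions on its basis labels `(n, f, m)`. -/
abbrev H2b (N : ℕ) := (ℕ × Conf N × ℕ) →₀ ℂ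

/-- The basis vector `|n⟩ ⊗ |f⟩ ⊗ |m⟩` of `H_{2b}`. -/
def ket2 {N : ℕ} (n : ℕ) (f : Conf N) (m : ℕ) : H2b N := Finsupp.single (n, f, m) 1

/-- The linear operator on `H_{2b}` determined by its values on the basis vectors. -/
def bigOp {N : ℕ} (t : ℕ → Conf N → ℕ → H2b N) : Module.End ℂ (H2b N) :=
  Finsupp.lsum ℂ fun p => LinearMap.toSpanSingleton ℂ (H2b N) (t p.1 p.2.1 p.2.2)

/-- The q-deformed number `[x]_q` with `q = e^h`. -/
def qnum (h x : ℂ) : ℂ :=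
  (Complex.exp (h * x) - Complex.exp (-(h * x))) / (Complex.exp h - Complex.exp (-h))

/-- An operator acting only on the left Verma factor, specified by its values
`g n : ℕ →₀ ℂ` on the Verma basis. -/
def lOp {N : ℕ} (g : ℕ → (ℕ →₀ ℂ)) : Module.End ℂ (H2b N) :=
  bigOp fun n f m => Finsupp.mapDomain (fun k => (k, f, m)) (g n)

/-- An operator acting only on the right Verma factor. -/
def rOp {N : ℕ} (g : ℕ → (ℕ →₀ ℂ)) : Module.End ℂ (H2b N) :=
  bigOp fun n f m => Finsupp.mapDomain (fun k => (n, f, k)) (g m)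

/-- Verma raising operator data: `E|n⟩ = [n]_q [α−n]_q |n−1⟩`, `E|0⟩ = 0`. -/
def gE (h α : ℂ) : ℕ → (ℕ →₀ ℂ) := fun n =>
  if n = 0 then 0 else (qnum h (n : ℂ) * qnum h (α - (n : ℂ))) • Finsupp.single (n - 1) 1

/-- Verma lowering operator data: `F|n⟩ = |n+1⟩`. -/
def gF : ℕ → (ℕ →₀ ℂ) := fun n => Finsupp.single (n + 1) 1

/-- Diagonal Verma operator data `sinh(x + cH) : |n⟩ ↦ sinh(x + c(α−1−2n))|n⟩`. -/
def gSinh (α x c : ℂ) : ℕ → (ℕ →₀ ℂ) := fun n =>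
  Complex.sinh (x + c * (α - 1 - 2 * (n : ℂ))) • Finsupp.single n 1

/-- Diagonal Verma operator data `e^{x + cH} : |n⟩ ↦ e^{x + c(α−1−2n)}|n⟩`. -/
def gExp (α x c : ℂ) : ℕ → (ℕ →₀ ℂ) := fun n =>
  Complex.exp (x + c * (α - 1 - 2 * (n : ℂ))) • Finsupp.single n 1

/-- Operators on `ℂ²_0 ⊗ H_{2b}` as 2×2 matrices in the auxiliary space with entries in
`End(H_{2b})`. -/
abbrev AuxMat (N : ℕ) := Matrix (Fin 2) (Fin 2) (Module.End ℂ (H2b N))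

/-- The scalar trigonometric R-matrix on `ℂ² ⊗ ℂ²` (ordered basis ↑↑, ↑↓, ↓↑, ↓↓). -/
def Rsc (h w : ℂ) : Matrix (Fin 2 × Fin 2) (Fin 2 × Fin 2) ℂ :=
  Matrix.of fun p r =>
    if p = r then (if p.1 = p.2 then Complex.sinh (w + h) else Complex.sinh w)
    else if p = ((0 : Fin 2), (1 : Fin 2)) ∧ r = ((1 : Fin 2), (0 : Fin 2)) then
      Complex.sinh h * Complex.exp w
    else if p = ((1 : Fin 2), (0 : Fin 2)) ∧ r = ((0 : Fin 2), (1 : Fin 2)) then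
      Complex.sinh h * Complex.exp (-w)
    else 0

/-- A two-spin R-matrix (auxiliary ⊗ site `j`) written as a 2×2 matrix in the auxiliary
space whose entries act on the `j`-th spin site of `H_{2b}`. -/
def siteAux {N : ℕ} (R4 : Matrix (Fin 2 × Fin 2) (Fin 2 × Fin 2) ℂ) (j : Fin N) :
    AuxMat N :=
  Matrix.of fun a a' => bigOp fun n f m =>
    ∑ s : Fin 2, R4 (a, s) (a', f j) • ket2 n (Function.update f j s) m

/-- `R_{0,i}(w)`. -/
def R0i (N : ℕ) (h w : ℂ) (j : Fin N) : AuxMat N := siteAux (Rsc h w) j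

/-- `R_{i,0}(w) = P R(w) P`. -/
def Ri0 (N : ℕ) (h w : ℂ) (j : Fin N) : AuxMat N :=
  siteAux (Matrix.of fun p r => Rsc h w p.swap r.swap) j

/-- `R_{0,V_{α_l}}(w)` acting on the auxiliary space and the left Verma factor. -/
def R0Vl (N : ℕ) (h αl w : ℂ) : AuxMat N :=
  !![lOp (gSinh αl (w + h / 2) (h / 2)),
      Complex.sinh h • (lOp (gExp αl (w + h / 2) (h / 2)) * lOp gF);
      Complex.sinh h • (lOp (gE h αl) * lOp (gExp αl (-w - h / 2) (-(h / 2)))),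
      lOp (gSinh αl (w + h / 2) (-(h / 2)))]

/-- `R_{V_{α_l},0}(w)`. -/
def RVl0 (N : ℕ) (h αl w : ℂ) : AuxMat N :=
  !![lOp (gSinh αl (w + h / 2) (h / 2)),
      Complex.sinh h • (lOp gF * lOp (gExp αl (-w - h / 2) (h / 2)));
      Complex.sinh h • (lOp (gExp αl (w + h / 2) (-(h / 2))) * lOp (gE h αl)),
      lOp (gSinh αl (w + h / 2) (-(h / 2)))]

/-- `R_{0,V_{α_r}}(w)` acting on the auxiliary space and the right Verma factor. -/
def R0Vr (N : ℕ) (h αr w : ℂ) : AuxMat N :=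
  !![rOp (gSinh αr (w + h / 2) (h / 2)),
      Complex.sinh h • (rOp (gExp αr (w + h / 2) (h / 2)) * rOp gF);
      Complex.sinh h • (rOp (gE h αr) * rOp (gExp αr (-w - h / 2) (-(h / 2)))),
      rOp (gSinh αr (w + h / 2) (-(h / 2)))]

/-- `R_{V_{α_r},0}(w)`. -/
def RVr0 (N : ℕ) (h αr w : ℂ) : AuxMat N :=
  !![rOp (gSinh αr (w + h / 2) (h / 2)),
      Complex.sinh h • (rOp gF * rOp (gExp αr (-w - h / 2) (h / 2)));
      Complex.sinh h • (rOp (gExp αr (w + h / 2) (-(h / 2))) * rOp (gE h αr)),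
      rOp (gSinh αr (w + h / 2) (-(h / 2)))]

/-- The monodromy `T(u) = R_{0,V_{α_r}}(u−ζ_r) R_{0,N}(u) ⋯ R_{0,1}(u) R_{0,V_{α_l}}(u−ζ_l)`. -/
def Tmon (N : ℕ) (h αl αr ζl ζr u : ℂ) : AuxMat N :=
  R0Vr N h αr (u - ζr) *
    ((List.finRange N).reverse.map fun i => R0i N h u i).prod *
    R0Vl N h αl (u - ζl)

/-- The monodromy `T̂(u) = R_{V_{α_l},0}(u+ζ_l) R_{1,0}(u) ⋯ R_{N,0}(u) R_{V_{α_r},0}(u+ζ_r)`. -/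
def Tmonhat (N : ℕ) (h αl αr ζl ζr u : ℂ) : AuxMat N :=
  RVl0 N h αl (u + ζl) *
    ((List.finRange N).map fun i => Ri0 N h u i).prod *
    RVr0 N h αr (u + ζr)

/-- The double-row monodromy `𝒯(u) = T(u−h/2) T̂(u−h/2)`. -/
def Tcal (N : ℕ) (h αl αr ζl ζr u : ℂ) : AuxMat N :=
  Tmon N h αl αr ζl ζr (u - h / 2) * Tmonhat N h αl αr ζl ζr (u - h / 2)

/-- The Bethe-ansatz creation operator `B(u)`, the upper-right entry of `𝒯(u)`. -/
def Bop (N : ℕ) (h αl αr ζl ζr u : ℂ) : Module.End ℂ (H2b N) :=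
  Tcal N h αl αr ζl ζr u 0 1

/-- The two-boundary transfer matrix `t_{2b}(u) = e^h 𝒜(u) + e^{−h} 𝒟(u)`. -/
def t2b (N : ℕ) (h αl αr ζl ζr u : ℂ) : Module.End ℂ (H2b N) :=
  Complex.exp h • Tcal N h αl αr ζl ζr u 0 0 + Complex.exp (-h) • Tcal N h αl αr ζl ζr u 1 1

/-- The reference state `|⇑⟩ = |0⟩ ⊗ |↑⟩^{⊗N} ⊗ |0⟩`. -/
def vac (N : ℕ) : H2b N := ket2 0 (fun _ => 0) 0

/-- The Bethe vector `B(v_1) ⋯ B(v_M) |⇑⟩`. -/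
def betheVec (N : ℕ) (h αl αr ζl ζr : ℂ) {M : ℕ} (v : Fin M → ℂ) : H2b N :=
  (((List.finRange M).map fun m => Bop N h αl αr ζl ζr (v m)).prod) (vac N)

/-- The boundary dressing function `Δ_{l/r}(u)`. -/
def Dlt (h α ζ u : ℂ) : ℂ :=
  Complex.sinh (u + h * (α - 1) / 2 - ζ) * Complex.sinh (u + h * (α - 1) / 2 + ζ)

open Complex
set_option linter.unusedVariables false
set_option linter.unusedSimpArgs false
/-! scalar identities -/
lemma sinh_fx (x : ℂ) : sinh x = (exp x - (exp x)⁻¹)/2 := by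
  rw [Complex.sinh, Complex.exp_neg]

def aF (h u v : ℂ) : ℂ := sinh (u-v-h) * sinh (u+v-h) / (sinh (u-v) * sinh (u+v))
def dF (h u v : ℂ) : ℂ := sinh (u-v+h) * sinh (u+v+h) / (sinh (u-v) * sinh (u+v))
def g1 (h u v : ℂ) : ℂ := exp (u-v) * (sinh h * sinh (2*v-h) / (sinh (2*v) * sinh (u-v)))
def g2 (h u v : ℂ) : ℂ := -(exp (u+v-h) * (sinh h / sinh (u+v)))
def g1' (h u v : ℂ) : ℂ := -(exp (v-u) * (sinh h * sinh (2*u+h) / (sinh (2*u) * sinh (u-v))))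
def g2' (h u v : ℂ) : ℂ := exp (-u-v+h) * (sinh h * sinh (2*u+h) * sinh (2*v-h)/ (sinh (2*u) * sinh (2*v) * sinh (u+v)))
def kap (h u : ℂ) : ℂ := sinh h * exp (h-2*u) / sinh (2*u)

lemma sinh_nz_sub {u v : ℂ} (H : sinh (u-v) ≠ 0) : exp u^2 - exp v^2 ≠ 0 := by
  intro e; apply H
  rw [sinh_fx, Complex.exp_sub]
  have := exp_ne_zero u; have := exp_ne_zero v
  field_simp; linear_combination e
lemma sinh_nz_add {u v : ℂ} (H : sinh (u+v) ≠ 0) : exp u^2 * exp v^2 - 1 ≠ 0 := by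
  intro e; apply H
  rw [sinh_fx, Complex.exp_add]
  have := exp_ne_zero u; have := exp_ne_zero v
  field_simp; linear_combination e

section
variable {h u v w : ℂ}
lemma sub_fx (u v : ℂ): sinh (u-v) = (exp u^2 - exp v^2)/(2*exp u*exp v) := by
  rw [sinh_fx, Complex.exp_sub]
  have := exp_ne_zero u; have := exp_ne_zero v
  field_simp
lemma add_fx (u v : ℂ): sinh (u+v) = (exp u^2 * exp v^2-1)/(2*exp u*exp v) := by
  rw [sinh_fx, Complex.exp_add]
  have := exp_ne_zero u; have := exp_ne_zero v
  field_simp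
lemma e2 (u : ℂ) : exp (2*u) = exp u^2 := by rw [two_mul, Complex.exp_add]; ring
lemma d_fx (u : ℂ): sinh (2*u) = (exp u^4-1)/(2*exp u^2) := by
  rw [sinh_fx, e2]
  have := exp_ne_zero u
  field_simp

lemma d_nz (H : sinh (2*u) ≠ 0) : exp u^4 - 1 ≠ 0 := by
  intro e; apply H; rw [d_fx, e]; simp

set_option maxHeartbeats 4000000
lemma id1 (h1 : exp u^4-1 ≠ 0) (h2 : exp v^4-1 ≠ 0) (h3 : exp w^4-1 ≠ 0)
  (h4 : exp u^2 - exp v^2 ≠ 0) (h5 : exp u^2 - exp w^2 ≠ 0) (h6 : exp v^2 - exp w^2 ≠ 0) (h6' : exp w^2 - exp v^2 ≠ 0)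
  (h7 : exp u^2 * exp v^2-1 ≠ 0) (h8 : exp u^2 * exp w^2-1 ≠ 0) (h9 : exp v^2 * exp w^2-1 ≠ 0) (h9' : exp w^2 * exp v^2-1 ≠ 0):
  aF h u v * g1 h u w + g1 h u v * g1 h v w + g2 h u v * g2' h v w = g1 h u w * aF h w v := by
  simp only [aF, dF, g1, g2, g1', g2', kap]
  simp only [sub_fx, add_fx, d_fx, Complex.exp_add, Complex.exp_sub, e2, Complex.exp_neg, sinh_fx h]
  have := exp_ne_zero u; have := exp_ne_zero v; have := exp_ne_zero w; have := exp_ne_zero h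
  field_simp
  ring
lemma id2 (h1 : exp u^4-1 ≠ 0) (h2 : exp v^4-1 ≠ 0) (h3 : exp w^4-1 ≠ 0)
  (h4 : exp u^2 - exp v^2 ≠ 0) (h5 : exp u^2 - exp w^2 ≠ 0) (h6 : exp v^2 - exp w^2 ≠ 0) (h6' : exp w^2 - exp v^2 ≠ 0)
  (h7 : exp u^2 * exp v^2-1 ≠ 0) (h8 : exp u^2 * exp w^2-1 ≠ 0) (h9 : exp v^2 * exp w^2-1 ≠ 0) (h9' : exp w^2 * exp v^2-1 ≠ 0):
  aF h u v * g2 h u w + g1 h u v * g2 h v w + g2 h u v * g1' h v w = g2 h u w * dF h w v := by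
  simp only [aF, dF, g1, g2, g1', g2', kap]
  simp only [sub_fx, add_fx, d_fx, Complex.exp_add, Complex.exp_sub, e2, Complex.exp_neg, sinh_fx h]
  have := exp_ne_zero u; have := exp_ne_zero v; have := exp_ne_zero w; have := exp_ne_zero h
  field_simp
  ring
lemma id3 (h1 : exp u^4-1 ≠ 0) (h2 : exp v^4-1 ≠ 0) (h3 : exp w^4-1 ≠ 0)
  (h4 : exp u^2 - exp v^2 ≠ 0) (h5 : exp u^2 - exp w^2 ≠ 0) (h6 : exp v^2 - exp w^2 ≠ 0) (h6' : exp w^2 - exp v^2 ≠ 0)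
  (h7 : exp u^2 * exp v^2-1 ≠ 0) (h8 : exp u^2 * exp w^2-1 ≠ 0) (h9 : exp v^2 * exp w^2-1 ≠ 0) (h9' : exp w^2 * exp v^2-1 ≠ 0):
  dF h u v * g1' h u w + g1' h u v * g1' h v w + g2' h u v * g2 h v w = g1' h u w * dF h w v := by
  simp only [aF, dF, g1, g2, g1', g2', kap]
  simp only [sub_fx, add_fx, d_fx, Complex.exp_add, Complex.exp_sub, e2, Complex.exp_neg, sinh_fx h]
  have := exp_ne_zero u; have := exp_ne_zero v; have := exp_ne_zero w; have := exp_ne_zero h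
  field_simp
  ring
lemma id4 (h1 : exp u^4-1 ≠ 0) (h2 : exp v^4-1 ≠ 0) (h3 : exp w^4-1 ≠ 0)
  (h4 : exp u^2 - exp v^2 ≠ 0) (h5 : exp u^2 - exp w^2 ≠ 0) (h6 : exp v^2 - exp w^2 ≠ 0) (h6' : exp w^2 - exp v^2 ≠ 0)
  (h7 : exp u^2 * exp v^2-1 ≠ 0) (h8 : exp u^2 * exp w^2-1 ≠ 0) (h9 : exp v^2 * exp w^2-1 ≠ 0) (h9' : exp w^2 * exp v^2-1 ≠ 0):
  dF h u v * g2' h u w + g1' h u v * g2' h v w + g2' h u v * g1 h v w = g2' h u w * aF h w v := by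
  simp only [aF, dF, g1, g2, g1', g2', kap]
  simp only [sub_fx, add_fx, d_fx, Complex.exp_add, Complex.exp_sub, e2, Complex.exp_neg, sinh_fx h]
  have := exp_ne_zero u; have := exp_ne_zero v; have := exp_ne_zero w; have := exp_ne_zero h
  field_simp
  ring
end

/-- genericity of a pair -/
def Gn (h u v : ℂ) : Prop := sinh (2*u) ≠ 0 ∧ sinh (2*v) ≠ 0 ∧ sinh (u-v) ≠ 0 ∧ sinh (u+v) ≠ 0 ∧
  sinh (u-v+h) ≠ 0 ∧ sinh (u+v-h) ≠ 0

lemma prod_erase_zero {M : ℕ} (f : Fin (M+1) → ℂ) :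
    ∏ k ∈ Finset.univ.erase (0 : Fin (M+1)), f k = ∏ k : Fin M, f k.succ := by
  have : Finset.univ.erase (0 : Fin (M+1)) = Finset.univ.map (Fin.succEmb M) := by
    ext k; simp only [Finset.mem_erase, Finset.mem_univ, and_true, Finset.mem_map, true_and]
    constructor
    · intro hk; exact ⟨k.pred hk, by simp⟩
    · rintro ⟨j, rfl⟩; exact Fin.succ_ne_zero j
  rw [this, Finset.prod_map]; rfl

lemma prod_erase_succ {M : ℕ} (f : Fin (M+1) → ℂ) (m : Fin M) :
    ∏ k ∈ Finset.univ.erase m.succ, f k = f 0 * ∏ k ∈ Finset.univ.erase m, f k.succ := by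
  have : Finset.univ.erase (m.succ) = insert 0 ((Finset.univ.erase m).map (Fin.succEmb M)) := by
    ext k
    refine Fin.cases ?_ (fun j => ?_) k
    · simp [(Fin.succ_ne_zero m).symm]
    · simp [Fin.succ_ne_zero]
  rw [this, Finset.prod_insert, Finset.prod_map]
  · rfl
  · simp [Fin.succ_ne_zero]

theorem aba {V : Type*} [AddCommGroup V] [Module ℂ V] (h : ℂ) (A B D : ℂ → Module.End ℂ V)
    (Ω : V) (a d : ℂ → ℂ)
    (hAB : ∀ u v, Gn h u v →
      A u * B v = aF h u v • (B v * A u) + g1 h u v • (B u * A v) + g2 h u v • (B u * D v))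
    (hDB : ∀ u v, Gn h u v →
      D u * B v = dF h u v • (B v * D u) + g1' h u v • (B u * D v) + g2' h u v • (B u * A v))
    (hBB : ∀ u v, Gn h u v → B u * B v = B v * B u)
    (hA : ∀ u, sinh (2*u) ≠ 0 → A u Ω = a u • Ω) (hD : ∀ u, sinh (2*u) ≠ 0 → D u Ω = d u • Ω) :
    ∀ (M : ℕ) (v : Fin M → ℂ), (∀ m, sinh (2 * v m) ≠ 0) →
      (∀ m k, m ≠ k → Gn h (v m) (v k)) →
      ∃ w : Fin M → V, ∀ u, sinh (2*u) ≠ 0 → (∀ m, Gn h u (v m)) →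
        A u ((((List.finRange M).map fun m => B (v m)).prod) Ω) =
          (a u * ∏ k, aF h u (v k)) • ((((List.finRange M).map fun m => B (v m)).prod) Ω) +
          ∑ m, (g1 h u (v m) * (a (v m) * ∏ k ∈ Finset.univ.erase m, aF h (v m) (v k)) +
            g2 h u (v m) * (d (v m) * ∏ k ∈ Finset.univ.erase m, dF h (v m) (v k))) • B u (w m)
        ∧ D u ((((List.finRange M).map fun m => B (v m)).prod) Ω) =
          (d u * ∏ k, dF h u (v k)) • ((((List.finRange M).map fun m => B (v m)).prod) Ω) +
          ∑ m, (g2' h u (v m) * (a (v m) * ∏ k ∈ Finset.univ.erase m, aF h (v m) (v k)) +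
            g1' h u (v m) * (d (v m) * ∏ k ∈ Finset.univ.erase m, dF h (v m) (v k))) • B u (w m) := by
  intro M
  induction M with
  | zero =>
    intro v _ _
    refine ⟨fun _ => 0, fun u hu _ => ?_⟩
    simp [hA u hu, hD u hu]
  | succ M ih =>
    intro v hv1 hv2
    obtain ⟨w, hw⟩ := ih (fun m => v m.succ) (fun m => hv1 _)
      (fun m k hmk => hv2 _ _ (fun e => hmk (Fin.succ_injective _ e)))
    set ψ := (((List.finRange M).map fun m => B (v m.succ)).prod) Ω with hψ
    have hprod : (((List.finRange (M+1)).map fun m => B (v m)).prod) Ω = B (v 0) ψ := by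
      rw [List.finRange_succ, List.map_cons, List.prod_cons, List.map_map]; rfl
    refine ⟨Fin.cases ψ (fun m => B (v 0) (w m)), fun u hu huv => ?_⟩
    rw [hprod]
    have hu0 := huv 0
    obtain ⟨tA, tD⟩ := hw u hu (fun m => huv _)
    obtain ⟨sA, sD⟩ := hw (v 0) (hv1 0) (fun m => hv2 _ _ (Fin.succ_ne_zero m).symm)
    have eAB := congrArg (fun T => T ψ) (hAB u (v 0) hu0)
    have eDB := congrArg (fun T => T ψ) (hDB u (v 0) hu0)
    have eBB : ∀ x, B (v 0) (B u x) = B u (B (v 0) x) := fun x =>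
      (congrArg (fun T => T x) (hBB u (v 0) hu0)).symm
    simp only [Module.End.mul_apply, LinearMap.add_apply, LinearMap.smul_apply] at eAB eDB
    have ids : ∀ m : Fin M, (exp u^4-1 ≠ 0 ∧ exp (v 0)^4-1 ≠ 0 ∧ exp (v m.succ)^4-1 ≠ 0) ∧
      (exp u^2 - exp (v 0)^2 ≠ 0 ∧ exp u^2 - exp (v m.succ)^2 ≠ 0 ∧ exp (v 0)^2 - exp (v m.succ)^2 ≠ 0 ∧
        exp (v m.succ)^2 - exp (v 0)^2 ≠ 0) ∧ (exp u^2 * exp (v 0)^2-1 ≠ 0 ∧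
        exp u^2 * exp (v m.succ)^2-1 ≠ 0 ∧ exp (v 0)^2 * exp (v m.succ)^2-1 ≠ 0 ∧
        exp (v m.succ)^2 * exp (v 0)^2-1 ≠ 0) := by
      intro m
      have h0 := hv2 0 m.succ (Fin.succ_ne_zero m).symm
      have h0' := hv2 m.succ 0 (Fin.succ_ne_zero m)
      have hm := huv m.succ
      exact ⟨⟨d_nz hu, d_nz (hv1 _), d_nz (hv1 _)⟩, ⟨sinh_nz_sub hu0.2.2.1, sinh_nz_sub hm.2.2.1,
        sinh_nz_sub h0.2.2.1, sinh_nz_sub h0'.2.2.1⟩, ⟨sinh_nz_add hu0.2.2.2.1,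
        sinh_nz_add hm.2.2.2.1, sinh_nz_add h0.2.2.2.1, sinh_nz_add h0'.2.2.2.1⟩⟩
    constructor
    · rw [eAB, tA, sA, sD, Fin.prod_univ_succ, Fin.sum_univ_succ]
      simp only [prod_erase_zero, prod_erase_succ, Fin.cases_zero, Fin.cases_succ, map_add, map_sum, map_smul,
        eBB, smul_add, Finset.smul_sum, smul_smul]
      have key : ∀ m : Fin M, (g1 h u (v m.succ) *
            (a (v m.succ) * (aF h (v m.succ) (v 0) * ∏ k ∈ Finset.univ.erase m, aF h (v m.succ) (v k.succ))) +
          g2 h u (v m.succ) *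
            (d (v m.succ) * (dF h (v m.succ) (v 0) * ∏ k ∈ Finset.univ.erase m, dF h (v m.succ) (v k.succ)))) •
            B u (B (v 0) (w m)) =
          (aF h u (v 0) * (g1 h u (v m.succ) * (a (v m.succ) * ∏ k ∈ Finset.univ.erase m, aF h (v m.succ) (v k.succ)) +
            g2 h u (v m.succ) * (d (v m.succ) * ∏ k ∈ Finset.univ.erase m, dF h (v m.succ) (v k.succ)))) •
            B u (B (v 0) (w m)) +
          (g1 h u (v 0) * (g1 h (v 0) (v m.succ) * (a (v m.succ) * ∏ k ∈ Finset.univ.erase m, aF h (v m.succ) (v k.succ)) +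
            g2 h (v 0) (v m.succ) * (d (v m.succ) * ∏ k ∈ Finset.univ.erase m, dF h (v m.succ) (v k.succ)))) •
            B u (B (v 0) (w m)) +
          (g2 h u (v 0) * (g2' h (v 0) (v m.succ) * (a (v m.succ) * ∏ k ∈ Finset.univ.erase m, aF h (v m.succ) (v k.succ)) +
            g1' h (v 0) (v m.succ) * (d (v m.succ) * ∏ k ∈ Finset.univ.erase m, dF h (v m.succ) (v k.succ)))) •
            B u (B (v 0) (w m)) := by
        intro m
        obtain ⟨⟨c1, c2, c3⟩, ⟨c4, c5, c6, c6'⟩, ⟨c7, c8, c9, c9'⟩⟩ := ids m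
        have i1 := id1 (h := h) c1 c2 c3 c4 c5 c6 c6' c7 c8 c9 c9'
        have i2 := id2 (h := h) c1 c2 c3 c4 c5 c6 c6' c7 c8 c9 c9'
        rw [← add_smul, ← add_smul]
        congr 1
        linear_combination -(a (v m.succ) * ∏ k ∈ Finset.univ.erase m, aF h (v m.succ) (v k.succ)) * i1
          - (d (v m.succ) * ∏ k ∈ Finset.univ.erase m, dF h (v m.succ) (v k.succ)) * i2
      rw [Finset.sum_congr rfl (fun m _ => key m), Finset.sum_add_distrib, Finset.sum_add_distrib]
      module
    · rw [eDB, tD, sA, sD, Fin.prod_univ_succ, Fin.sum_univ_succ]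
      simp only [prod_erase_zero, prod_erase_succ, Fin.cases_zero, Fin.cases_succ, map_add, map_sum, map_smul,
        eBB, smul_add, Finset.smul_sum, smul_smul]
      have key : ∀ m : Fin M, (g2' h u (v m.succ) *
            (a (v m.succ) * (aF h (v m.succ) (v 0) * ∏ k ∈ Finset.univ.erase m, aF h (v m.succ) (v k.succ))) +
          g1' h u (v m.succ) *
            (d (v m.succ) * (dF h (v m.succ) (v 0) * ∏ k ∈ Finset.univ.erase m, dF h (v m.succ) (v k.succ)))) •
            B u (B (v 0) (w m)) =
          (dF h u (v 0) * (g2' h u (v m.succ) * (a (v m.succ) * ∏ k ∈ Finset.univ.erase m, aF h (v m.succ) (v k.succ)) +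
            g1' h u (v m.succ) * (d (v m.succ) * ∏ k ∈ Finset.univ.erase m, dF h (v m.succ) (v k.succ)))) •
            B u (B (v 0) (w m)) +
          (g1' h u (v 0) * (g2' h (v 0) (v m.succ) * (a (v m.succ) * ∏ k ∈ Finset.univ.erase m, aF h (v m.succ) (v k.succ)) +
            g1' h (v 0) (v m.succ) * (d (v m.succ) * ∏ k ∈ Finset.univ.erase m, dF h (v m.succ) (v k.succ)))) •
            B u (B (v 0) (w m)) +
          (g2' h u (v 0) * (g1 h (v 0) (v m.succ) * (a (v m.succ) * ∏ k ∈ Finset.univ.erase m, aF h (v m.succ) (v k.succ)) +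
            g2 h (v 0) (v m.succ) * (d (v m.succ) * ∏ k ∈ Finset.univ.erase m, dF h (v m.succ) (v k.succ)))) •
            B u (B (v 0) (w m)) := by
        intro m
        obtain ⟨⟨c1, c2, c3⟩, ⟨c4, c5, c6, c6'⟩, ⟨c7, c8, c9, c9'⟩⟩ := ids m
        have i1 := id4 (h := h) c1 c2 c3 c4 c5 c6 c6' c7 c8 c9 c9'
        have i2 := id3 (h := h) c1 c2 c3 c4 c5 c6 c6' c7 c8 c9 c9'
        rw [← add_smul, ← add_smul]
        congr 1
        linear_combination -(a (v m.succ) * ∏ k ∈ Finset.univ.erase m, aF h (v m.succ) (v k.succ)) * i1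
          - (d (v m.succ) * ∏ k ∈ Finset.univ.erase m, dF h (v m.succ) (v k.succ)) * i2
      rw [Finset.sum_congr rfl (fun m _ => key m), Finset.sum_add_distrib, Finset.sum_add_distrib]
      module

section RE
set_option linter.unusedSectionVars false
variable {A : Type*} [Ring A] [Algebra ℂ A]

/-- R-matrix with algebra entries -/
def RM (a b c d : ℂ) : Matrix (Fin 2 × Fin 2) (Fin 2 × Fin 2) A :=
  Matrix.of fun i j => algebraMap ℂ A
    (if i = j then (if i.1 = i.2 then a else b)
      else if i = (0,1) ∧ j = (1,0) then c
      else if i = (1,0) ∧ j = (0,1) then d else 0)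

def m1 (K : Matrix (Fin 2) (Fin 2) A) : Matrix (Fin 2 × Fin 2) (Fin 2 × Fin 2) A :=
  Matrix.of fun i j => if i.2 = j.2 then K i.1 j.1 else 0
def m2 (K : Matrix (Fin 2) (Fin 2) A) : Matrix (Fin 2 × Fin 2) (Fin 2 × Fin 2) A :=
  Matrix.of fun i j => if i.1 = j.1 then K i.2 j.2 else 0

def EC (K L : Matrix (Fin 2) (Fin 2) A) : Prop := ∀ i j k l, Commute (K i j) (L k l)

lemma m1_mul (K L : Matrix (Fin 2) (Fin 2) A) : m1 (K * L) = m1 K * m1 L := by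
  ext ⟨i, i'⟩ ⟨j, j'⟩
  fin_cases i' <;> fin_cases j' <;> simp [m1, Matrix.mul_apply, Fintype.sum_prod_type]
lemma m2_mul (K L : Matrix (Fin 2) (Fin 2) A) : m2 (K * L) = m2 K * m2 L := by
  ext ⟨i, i'⟩ ⟨j, j'⟩
  fin_cases i <;> fin_cases j <;> simp [m2, Matrix.mul_apply, Fintype.sum_prod_type]
lemma m12_comm (K L : Matrix (Fin 2) (Fin 2) A) (H : EC K L) : m1 K * m2 L = m2 L * m1 K := by
  ext ⟨i, i'⟩ ⟨j, j'⟩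
  have := fun i j k l => (H i j k l).eq
  simp [m1, m2, Matrix.mul_apply, Fintype.sum_prod_type, this]

lemma EC.symm {K L : Matrix (Fin 2) (Fin 2) A} (H : EC K L) : EC L K := fun i j k l => (H k l i j).symm
lemma EC.mul {K L M : Matrix (Fin 2) (Fin 2) A} (H : EC K L) (H' : EC K M) : EC K (L * M) := by
  intro i j k l
  simp only [Matrix.mul_apply]
  exact Commute.sum_right _ _ _ fun x _ => (H i j k x).mul_right (H' i j x l)
lemma EC.one {K : Matrix (Fin 2) (Fin 2) A} : EC K 1 := by
  intro i j k l
  rw [Matrix.one_apply]; split_ifs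
  · exact Commute.one_right _
  · exact Commute.zero_right _

def R12 (h w : ℂ) : Matrix (Fin 2 × Fin 2) (Fin 2 × Fin 2) A :=
  RM (sinh (w+h)) (sinh w) (sinh h * exp w) (sinh h * exp (-w))
def R21 (h w : ℂ) : Matrix (Fin 2 × Fin 2) (Fin 2 × Fin 2) A :=
  RM (sinh (w+h)) (sinh w) (sinh h * exp (-w)) (sinh h * exp w)

/-- reflection equation -/
def RE (h : ℂ) (K : ℂ → Matrix (Fin 2) (Fin 2) A) : Prop := ∀ u v,
  R12 h (u-v) * m1 (K u) * R21 h (u+v) * m2 (K v) = m2 (K v) * R12 h (u+v) * m1 (K u) * R21 h (u-v)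

structure LaxPair (h : ℂ) (L L' : ℂ → Matrix (Fin 2) (Fin 2) A) : Prop where
  r1 : ∀ u v, R12 h (u-v) * m1 (L u) * m2 (L v) = m2 (L v) * m1 (L u) * R12 h (u-v)
  r2 : ∀ u v, m1 (L' u) * R21 h (u+v) * m2 (L v) = m2 (L v) * R21 h (u+v) * m1 (L' u)
  r3 : ∀ u v, R21 h (u-v) * m1 (L' u) * m2 (L' v) = m2 (L' v) * m1 (L' u) * R21 h (u-v)
  r4 : ∀ u v, m1 (L u) * R12 h (u+v) * m2 (L' v) = m2 (L' v) * R12 h (u+v) * m1 (L u)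

lemma RE_dress {h : ℂ} {L L' K : ℂ → Matrix (Fin 2) (Fin 2) A} (hL : LaxPair h L L') (hK : RE h K)
    (c : ∀ u v, EC (L u) (K v)) (c' : ∀ u v, EC (L' u) (K v)) : RE h (fun u => L u * K u * L' u) := by
  intro u v
  have e1 := hL.r1 u v
  have e2 := hL.r2 u v
  have e3 := hL.r3 u v
  have e4 := hL.r4 u v
  have e5 := hK u v
  have f1 := m12_comm _ _ (c u v)
  have f2 := m12_comm _ _ (c v u).symm
  have f3 := m12_comm _ _ (c' u v)
  have f4 := m12_comm _ _ (c' v u).symm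
  simp only [m1_mul, m2_mul]
  generalize m1 (L u) = L1 at *
  generalize m2 (L v) = L2 at *
  generalize m1 (L' u) = P1 at *
  generalize m2 (L' v) = P2 at *
  generalize m1 (K u) = K1 at *
  generalize m2 (K v) = K2 at *
  generalize R12 (A := A) h (u-v) = Rx at *
  generalize R21 (A := A) h (u-v) = Sx at *
  generalize R12 (A := A) h (u+v) = Ry at *
  generalize R21 (A := A) h (u+v) = Sy at *
  calc Rx * (L1 * K1 * P1) * Sy * (L2 * K2 * P2)
      = Rx * L1 * K1 * (P1 * Sy * L2) * K2 * P2 := by simp only [mul_assoc]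
    _ = Rx * L1 * (K1 * L2) * Sy * (P1 * K2) * P2 := by rw [e2]; simp only [mul_assoc]
    _ = (Rx * L1 * L2) * K1 * Sy * K2 * P1 * P2 := by rw [f2, f3]; simp only [mul_assoc]
    _ = L2 * L1 * (Rx * K1 * Sy * K2) * P1 * P2 := by rw [e1]; simp only [mul_assoc]
    _ = L2 * (L1 * K2) * Ry * K1 * (Sx * P1 * P2) := by rw [e5]; simp only [mul_assoc]
    _ = L2 * K2 * L1 * Ry * (K1 * P2) * P1 * Sx := by rw [e3, f1]; simp only [mul_assoc]
    _ = L2 * K2 * (L1 * Ry * P2) * K1 * P1 * Sx := by rw [f4]; simp only [mul_assoc]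
    _ = _ := by rw [e4]; simp only [mul_assoc]

set_option maxHeartbeats 2000000 in
lemma RE_one (h : ℂ) : RE h (fun _ => (1 : Matrix (Fin 2) (Fin 2) A)) := by
  intro u v
  have hm1 : m1 (1 : Matrix (Fin 2) (Fin 2) A) = 1 := by
    ext ⟨i, i'⟩ ⟨j, j'⟩
    fin_cases i <;> fin_cases i' <;> fin_cases j <;> fin_cases j' <;> simp [m1]
  have hm2 : m2 (1 : Matrix (Fin 2) (Fin 2) A) = 1 := by
    ext ⟨i, i'⟩ ⟨j, j'⟩
    fin_cases i <;> fin_cases i' <;> fin_cases j <;> fin_cases j' <;> simp [m2]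
  rw [hm1, hm2]
  simp only [mul_one, one_mul]
  have e1 := exp_ne_zero u
  have e2 := exp_ne_zero v
  have e3 := exp_ne_zero h
  ext ⟨i, i'⟩ ⟨j, j'⟩
  fin_cases i <;> fin_cases i' <;> fin_cases j <;> fin_cases j' <;>
    simp [R12, R21, RM, Matrix.mul_apply, Fintype.sum_prod_type] <;>
    simp only [← map_mul, ← map_add] <;> congr 1 <;>
    simp only [sinh_fx, Complex.exp_add, Complex.exp_sub, Complex.exp_neg] <;> field_simp <;> ring

variable (h : ℂ) (k ki E F : A)
/-- Lax operator; here `E` includes the factor `sinh h`. -/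
def Lx (w : ℂ) : Matrix (Fin 2) (Fin 2) A :=
  !![(exp (w+h/2)/2) • k - (exp (-(w+h/2))/2) • ki, (sinh h * exp (w+h/2)) • (k * F);
     exp (-(w+h/2)) • (E * ki), (exp (w+h/2)/2) • ki - (exp (-(w+h/2))/2) • k]
def Lx' (w : ℂ) : Matrix (Fin 2) (Fin 2) A :=
  !![(exp (w+h/2)/2) • k - (exp (-(w+h/2))/2) • ki, (sinh h * exp (-(w+h/2))) • (F * k);
     exp (w+h/2) • (ki * E), (exp (w+h/2)/2) • ki - (exp (-(w+h/2))/2) • k]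

structure UQ : Prop where
  kki : k * ki = 1
  kik : ki * k = 1
  kE : k * E = exp h • (E * k)
  kF : k * F = (exp h)⁻¹ • (F * k)
  EF : E * F = F * E + (2:ℂ)⁻¹ • (k * k - ki * ki)

variable {h k ki E F}
set_option maxHeartbeats 8000000 in
lemma lax_pair (H : UQ h k ki E F) (ζ : ℂ) :
    LaxPair h (fun u => Lx h k ki E F (u - ζ)) (fun u => Lx' h k ki E F (u + ζ)) := by
  have e3 := exp_ne_zero (h/2)
  have e4 := exp_ne_zero ζ
  have hh : exp h = exp (h/2)^2 := by rw [← e2]; congr 1; ring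
  have e5 := exp_ne_zero h
  obtain ⟨kki, kik, kE, kF, EF⟩ := H
  have kiE : ki * E = (exp h)⁻¹ • (E * ki) := by
    have : ki * (k * E) * ki = exp h • (ki * (E * k) * ki) := by rw [kE]; simp
    rw [← mul_assoc ki k, kik, one_mul, ← mul_assoc ki E, mul_assoc _ k, kki, mul_one] at this
    rw [this, smul_smul, inv_mul_cancel₀ e5, one_smul]
  have kiF : ki * F = (exp h) • (F * ki) := by
    have : ki * (k * F) * ki = (exp h)⁻¹ • (ki * (F * k) * ki) := by rw [kF]; simp
    rw [← mul_assoc ki k, kik, one_mul, ← mul_assoc ki F, mul_assoc _ k, kki, mul_one] at this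
    rw [this, smul_smul, mul_inv_cancel₀ e5, one_smul]
  have kki' : ∀ x, k * (ki * x) = x := fun x => by rw [← mul_assoc, kki, one_mul]
  have kik' : ∀ x, ki * (k * x) = x := fun x => by rw [← mul_assoc, kik, one_mul]
  have kE' : ∀ x, k * (E * x) = exp h • (E * (k * x)) := fun x => by
    rw [← mul_assoc, kE, smul_mul_assoc, mul_assoc]
  have kF' : ∀ x, k * (F * x) = (exp h)⁻¹ • (F * (k * x)) := fun x => by
    rw [← mul_assoc, kF, smul_mul_assoc, mul_assoc]
  have kiE' : ∀ x, ki * (E * x) = (exp h)⁻¹ • (E * (ki * x)) := fun x => by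
    rw [← mul_assoc, kiE, smul_mul_assoc, mul_assoc]
  have kiF' : ∀ x, ki * (F * x) = exp h • (F * (ki * x)) := fun x => by
    rw [← mul_assoc, kiF, smul_mul_assoc, mul_assoc]
  have EF' : ∀ x, E * (F * x) = F * (E * x) + (2:ℂ)⁻¹ • (k * (k * x) - ki * (ki * x)) := fun x => by
    rw [← mul_assoc, EF]; simp only [add_mul, smul_mul_assoc, sub_mul, mul_assoc]
  constructor <;> intro u v <;> have f1 := exp_ne_zero u <;> have f2 := exp_ne_zero v <;>
  ext ⟨i, i'⟩ ⟨j, j'⟩ <;>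
  fin_cases i <;> fin_cases i' <;> fin_cases j <;> fin_cases j' <;>
    simp [R12, R21, RM, m1, m2, Lx, Lx', Matrix.mul_apply, Fintype.sum_prod_type, 
       Algebra.algebraMap_eq_smul_one] <;>
    simp only [mul_assoc, mul_add, add_mul, mul_sub, sub_mul, smul_mul_assoc, mul_smul_comm, kki, kik, kE, kF, kiE, kiF,
      kki', kik', kE', kF', kiE', kiF', EF, EF', smul_smul, smul_add, smul_sub, mul_one, one_mul] <;>
    match_scalars <;>
    simp only [sinh_fx, Complex.exp_add, Complex.exp_sub, Complex.exp_neg, hh] <;> field_simp <;> ring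
end RE

set_option maxHeartbeats 4000000

section comps
variable {A : Type*} [Ring A] [Algebra ℂ A]

lemma RE_BB {h : ℂ} {K : ℂ → Matrix (Fin 2) (Fin 2) A} (H : RE h K) (u v : ℂ)
    (n1 : sinh (u-v+h) ≠ 0) (n2 : sinh (u+v) ≠ 0) : K u 0 1 * K v 0 1 = K v 0 1 * K u 0 1 := by
  have := congrFun (congrFun (H u v) (0,0)) (1,1)
  simp [R12, R21, RM, m1, m2, Matrix.mul_apply, Fintype.sum_prod_type, 
       Algebra.algebraMap_eq_smul_one, mul_assoc, smul_smul] at this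
  exact smul_right_injective A (mul_ne_zero n1 n2) this

lemma RE_I {h : ℂ} {K : ℂ → Matrix (Fin 2) (Fin 2) A} (H : RE h K) (u v : ℂ) :
    (sinh (u-v) * sinh (u+v+h)) • (K v 0 0 * K u 0 1) = (sinh (u-v+h) * sinh (u+v)) • (K u 0 1 * K v 0 0)
      - (sinh (u-v) * (sinh h * exp (u+v))) • (K v 0 1 * K u 1 1)
      - (sinh h * exp (-(u-v)) * sinh (u+v)) • (K v 0 1 * K u 0 0) := by
  have := congrFun (congrFun (H u v) (0,0)) (1,0)
  simp [R12, R21, RM, m1, m2, Matrix.mul_apply, Fintype.sum_prod_type, add_mul, 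
       Algebra.algebraMap_eq_smul_one, mul_assoc, smul_smul, -neg_sub, -neg_add_rev] at this
  linear_combination (norm := module) (-1 : ℂ) • this

lemma RE_II {h : ℂ} {K : ℂ → Matrix (Fin 2) (Fin 2) A} (H : RE h K) (u v : ℂ) :
    (sinh (u-v) * sinh (u+v)) • (K u 1 1 * K v 0 1) =
      (sinh (u-v+h) * sinh (u+v+h)) • (K v 0 1 * K u 1 1)
      + (sinh (u-v+h) * (sinh h * exp (-(u+v)))) • (K v 0 0 * K u 0 1)
      - (sinh h * exp (-(u-v)) * sinh (u+v+h)) • (K u 0 1 * K v 1 1)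
      - (sinh h * exp (-(u-v)) * (sinh h * exp (-(u+v)))) • (K u 0 0 * K v 0 1) := by
  have := congrFun (congrFun (H u v) (1,0)) (1,1)
  simp [R12, R21, RM, m1, m2, Matrix.mul_apply, Fintype.sum_prod_type, add_mul,
       Algebra.algebraMap_eq_smul_one, mul_assoc, smul_smul, -neg_sub, -neg_add_rev] at this
  linear_combination (norm := module) (1 : ℂ) • this

lemma sinh_sub_ne {u v : ℂ} (H : sinh (u-v) ≠ 0) : sinh (v-u) ≠ 0 := by
  rw [← neg_sub, Complex.sinh_neg]; exact neg_ne_zero.mpr H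

def Dt (h : ℂ) (K : ℂ → Matrix (Fin 2) (Fin 2) A) (u : ℂ) : A := K u 1 1 - kap h u • K u 0 0

lemma rel_AB {h : ℂ} {K : ℂ → Matrix (Fin 2) (Fin 2) A} (H : RE h (fun u => K (u+h/2))) (u v : ℂ)
    (n1 : sinh (2*v) ≠ 0) (n2 : sinh (u-v) ≠ 0) (n3 : sinh (u+v) ≠ 0) :
    K u 0 0 * K v 0 1 = aF h u v • (K v 0 1 * K u 0 0) + g1 h u v • (K u 0 1 * K v 0 0)
      + g2 h u v • (K u 0 1 * Dt h K v) := by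
  have n2' := sinh_sub_ne n2
  have e := RE_I H (v-h/2) (u-h/2)
  simp only [sub_add_cancel, sub_sub_sub_cancel_right] at e
  rw [show v - h/2 + (u - h/2) + h = u + v by ring, show v - h/2 + (u - h/2) = u+v-h by ring] at e
  apply smul_right_injective A (mul_ne_zero n2' n3)
  dsimp only
  rw [e, show K v 1 1 = Dt h K v + kap h v • K v 0 0 by simp [Dt]]
  generalize Dt h K v = D at *
  have c1 := d_nz n1
  have c2 := sinh_nz_sub n2
  have c2' := sinh_nz_sub n2'
  have c3 := sinh_nz_add n3
  have c3' : exp v^2 * exp u^2 - 1 ≠ 0 := by rwa [mul_comm] 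
  have c4 := exp_ne_zero u
  have c5 := exp_ne_zero v
  have c6 := exp_ne_zero h
  simp only [mul_add, mul_smul_comm, smul_add, smul_smul]
  match_scalars
  all_goals
    simp only [aF, dF, g1, g2, g1', g2', kap]
    simp only [sub_fx, add_fx, d_fx, Complex.exp_add, Complex.exp_sub, e2, Complex.exp_neg, sinh_fx h]
    field_simp <;> ring

lemma rel_DB {h : ℂ} {K : ℂ → Matrix (Fin 2) (Fin 2) A} (H : RE h (fun u => K (u+h/2))) (u v : ℂ)
    (n0 : sinh (2*u) ≠ 0) (n1 : sinh (2*v) ≠ 0) (n2 : sinh (u-v) ≠ 0) (n3 : sinh (u+v) ≠ 0)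
    (n4 : sinh (u+v-h) ≠ 0) :
    Dt h K u * K v 0 1 = dF h u v • (K v 0 1 * Dt h K u) + g1' h u v • (K u 0 1 * Dt h K v)
      + g2' h u v • (K u 0 1 * K v 0 0) := by
  have n2' := sinh_sub_ne n2
  have n3' : sinh (v+u) ≠ 0 := by rwa [add_comm]
  have e := RE_II H (u-h/2) (v-h/2)
  have ab := rel_AB H u v n1 n2 n3
  have ba := rel_AB H v u n0 n2' n3'
  simp only [sub_add_cancel, sub_sub_sub_cancel_right] at e
  rw [show u - h/2 + (v - h/2) + h = u + v by ring, show u - h/2 + (v - h/2) = u+v-h by ring] at e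
  apply smul_right_injective A (mul_ne_zero n2 n4)
  dsimp only
  have e' : (sinh (u-v) * sinh (u+v-h)) • (Dt h K u * K v 0 1) = (sinh (u-v) * sinh (u+v-h)) • (K u 1 1 * K v 0 1)
     - (sinh (u-v) * sinh (u+v-h)) • kap h u • (K u 0 0 * K v 0 1) := by
    simp only [Dt, sub_mul, smul_sub, smul_mul_assoc]
  rw [e', e, ab, ba, show K v 1 1 = Dt h K v + kap h v • K v 0 0 by simp [Dt],
    show K u 1 1 = Dt h K u + kap h u • K u 0 0 by simp [Dt]]
  clear e' e ab ba
  generalize Dt h K v = D at *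
  generalize Dt h K u = D' at *
  have c0 := d_nz n0
  have c1 := d_nz n1
  have c2 := sinh_nz_sub n2
  have c2' := sinh_nz_sub n2'
  have c3 := sinh_nz_add n3
  have c3' := sinh_nz_add n3'
  have c4 := exp_ne_zero u
  have c5 := exp_ne_zero v
  have c6 := exp_ne_zero h
  simp only [mul_add, mul_smul_comm, smul_add, smul_smul]
  match_scalars
  all_goals
    simp only [aF, dF, g1, g2, g1', g2', kap]
    simp only [sub_fx, add_fx, d_fx, Complex.exp_add, Complex.exp_sub, e2, Complex.exp_neg, sinh_fx h]
    field_simp <;> ring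

lemma rel_BB {h : ℂ} {K : ℂ → Matrix (Fin 2) (Fin 2) A} (H : RE h (fun u => K (u+h/2))) (u v : ℂ)
    (n1 : sinh (u-v+h) ≠ 0) (n2 : sinh (u+v-h) ≠ 0) : K u 0 1 * K v 0 1 = K v 0 1 * K u 0 1 := by
  have e := RE_BB H (u-h/2) (v-h/2) (by convert n1 using 2; ring) (by convert n2 using 2; ring)
  simpa only [sub_add_cancel] using e
end comps


section inv
variable {V : Type*} [AddCommGroup V] [Module ℂ V]

/-- operator functions depending continuously on the parameter -/
inductive Nice : (ℂ → Module.End ℂ V) → Prop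
  | sm (c : ℂ → ℂ) (T : Module.End ℂ V) (hc : Continuous c) : Nice (fun u => c u • T)
  | ad (S T : ℂ → Module.End ℂ V) : Nice S → Nice T → Nice (fun u => S u + T u)

lemma Nice.mul {S T : ℂ → Module.End ℂ V} (hS : Nice S) (hT : Nice T) : Nice (fun u => S u * T u) := by
  induction hS with
  | sm c X hc =>
    induction hT with
    | sm d Y hd =>
      have := Nice.sm (fun u => c u * d u) (X * Y) (hc.mul hd)
      convert this using 2 with u
      rw [smul_mul_smul_comm]
    | ad S T _ _ h1 h2 =>
      have := Nice.ad _ _ h1 h2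
      convert this using 2 with u
      rw [mul_add]
  | ad S' T' _ _ h1 h2 =>
    have := Nice.ad _ _ h1 h2
    convert this using 2 with u
    rw [add_mul]

lemma Nice.cont {ι : Type*} {S : ℂ → Module.End ℂ (ι →₀ ℂ)} (hS : Nice S) (x : ι →₀ ℂ) (p : ι) :
    Continuous (fun u => S u x p) := by
  induction hS with
  | sm c T hc =>
    have : Continuous (fun u => c u * (T x) p) := hc.mul continuous_const
    exact this
  | ad S T _ _ h1 h2 => exact h1.add h2

lemma Nice.comp {S : ℂ → Module.End ℂ V} (hS : Nice S) (a : ℂ) : Nice (fun u => S (u + a)) := by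
  induction hS with
  | sm c T hc => exact Nice.sm (fun u => c (u+a)) T (by fun_prop)
  | ad S T _ _ h1 h2 => exact Nice.ad _ _ h1 h2

lemma Nice.sub' {c d : ℂ → ℂ} {X Y : Module.End ℂ V} (hc : Continuous c) (hd : Continuous d) :
    Nice (fun u => c u • X - d u • Y) := by
  have := Nice.ad _ _ (Nice.sm c X hc) (Nice.sm (fun u => - d u) Y hd.neg)
  convert this using 2 with u
  rw [neg_smul, sub_eq_add_neg]

def NiceM (K : ℂ → Matrix (Fin 2) (Fin 2) (Module.End ℂ V)) : Prop := ∀ i j, Nice (fun u => K u i j)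

lemma NiceM.mul {K L : ℂ → Matrix (Fin 2) (Fin 2) (Module.End ℂ V)} (hK : NiceM K) (hL : NiceM L) :
    NiceM (fun u => K u * L u) := by
  intro i j
  have := Nice.ad _ _ ((hK i 0).mul (hL 0 j)) ((hK i 1).mul (hL 1 j))
  convert this using 2 with u
  show (K u * L u) i j = _
  rw [Matrix.mul_apply, Fin.sum_univ_two]

def Ent (K : Matrix (Fin 2) (Fin 2) (Module.End ℂ V)) (C : Subalgebra ℂ (Module.End ℂ V)) : Prop :=
  ∀ i j, K i j ∈ C

lemma Ent.mul {K L : Matrix (Fin 2) (Fin 2) (Module.End ℂ V)} {C} (hK : Ent K C) (hL : Ent L C) :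
    Ent (K * L) C := by
  intro i j
  rw [Matrix.mul_apply]
  exact sum_mem fun x _ => mul_mem (hK i x) (hL x j)

lemma Ent.one {C : Subalgebra ℂ (Module.End ℂ V)} : Ent 1 C := by
  intro i j
  rw [Matrix.one_apply]
  split_ifs
  · exact one_mem _
  · exact zero_mem _

variable {h : ℂ} {k ki E F : Module.End ℂ V}

lemma ent_Lx {C : Subalgebra ℂ (Module.End ℂ V)} (w : ℂ) (c : {k, ki, E, F} ⊆ (C : Set (Module.End ℂ V))) :
    Ent (Lx h k ki E F w) C := by
  simp only [Set.insert_subset_iff, Set.singleton_subset_iff, SetLike.mem_coe] at c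
  obtain ⟨c1, c2, c3, c4⟩ := c
  intro i j
  fin_cases i <;> fin_cases j <;> simp [Lx]
  · exact sub_mem (C.smul_mem c1 _) (C.smul_mem c2 _)
  · exact C.smul_mem (mul_mem c1 c4) _
  · exact C.smul_mem (mul_mem c3 c2) _
  · exact sub_mem (C.smul_mem c2 _) (C.smul_mem c1 _)

lemma ent_Lx' {C : Subalgebra ℂ (Module.End ℂ V)} (w : ℂ) (c : {k, ki, E, F} ⊆ (C : Set (Module.End ℂ V))) :
    Ent (Lx' h k ki E F w) C := by
  simp only [Set.insert_subset_iff, Set.singleton_subset_iff, SetLike.mem_coe] at c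
  obtain ⟨c1, c2, c3, c4⟩ := c
  intro i j
  fin_cases i <;> fin_cases j <;> simp [Lx']
  · exact sub_mem (C.smul_mem c1 _) (C.smul_mem c2 _)
  · exact C.smul_mem (mul_mem c4 c1) _
  · exact C.smul_mem (mul_mem c2 c3) _
  · exact sub_mem (C.smul_mem c2 _) (C.smul_mem c1 _)

lemma nice_Lx (ζ : ℂ) : NiceM (fun u => Lx h k ki E F (u - ζ)) := by
  intro i j
  fin_cases i <;> fin_cases j <;> simp only [Lx]
  · exact Nice.sub' (by fun_prop) (by fun_prop)
  · exact Nice.sm (fun u => sinh h * exp (u - ζ + h/2)) _ (by fun_prop)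
  · exact Nice.sm (fun u => exp (-(u - ζ + h/2))) _ (by fun_prop)
  · exact Nice.sub' (by fun_prop) (by fun_prop)

lemma nice_Lx' (ζ : ℂ) : NiceM (fun u => Lx' h k ki E F (u + ζ)) := by
  intro i j
  fin_cases i <;> fin_cases j <;> simp only [Lx']
  · exact Nice.sub' (by fun_prop) (by fun_prop)
  · exact Nice.sm (fun u => sinh h * exp (-(u + ζ + h/2))) _ (by fun_prop)
  · exact Nice.sm (fun u => exp (u + ζ + h/2)) _ (by fun_prop)
  · exact Nice.sub' (by fun_prop) (by fun_prop)

structure BInv (h : ℂ) (K : ℂ → Matrix (Fin 2) (Fin 2) (Module.End ℂ V)) (Ω : V) (a d : ℂ → ℂ) : Prop where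
  re : RE h K
  nice : NiceM K
  va : ∀ u, sinh (2*u) ≠ 0 → K (u-h/2) 0 0 Ω = a u • Ω
  vc : ∀ u, sinh (2*u) ≠ 0 → K (u-h/2) 1 0 Ω = 0
  vd : ∀ u, sinh (2*u) ≠ 0 → K (u-h/2) 1 1 Ω = (d u + kap h u * a u) • Ω

lemma binv_one (h : ℂ) (Ω : V) : BInv h (fun _ => 1) Ω (fun _ => 1) (fun u => 1 - kap h u) := by
  refine ⟨RE_one h, ?_, ?_, ?_, ?_⟩
  · intro i j
    have := Nice.sm (fun _ => (1:ℂ)) ((1 : Matrix (Fin 2) (Fin 2) (Module.End ℂ V)) i j) continuous_const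
    simpa using this
  · intro u _; simp
  · intro u _; simp
  · intro u _; simp

lemma e_vd {h u ζ η : ℂ} (hu : sinh (2*u) ≠ 0) :
    sinh h * exp (-(u+ζ)) * (exp (-(u-ζ)) * exp h * ((exp η^2 - exp (-η)^2)/2))
     = kap h u * (sinh (u+η-ζ) * sinh (u+η+ζ) - sinh (u-η-ζ) * sinh (u-η+ζ)) := by
  have n1 := exp_ne_zero u
  have n2 := exp_ne_zero h
  have n3 := exp_ne_zero η
  have n4 := exp_ne_zero ζ
  have hu' := d_nz hu
  rw [kap, d_fx, sinh_fx (u+η-ζ), sinh_fx (u+η+ζ), sinh_fx (u-η-ζ), sinh_fx (u-η+ζ), Complex.exp_sub h, e2]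
  simp only [Complex.exp_neg, Complex.exp_add, Complex.exp_sub]
  field_simp
  ring

lemma binv_dress {K : ℂ → Matrix (Fin 2) (Fin 2) (Module.End ℂ V)} {Ω : V} {a d : ℂ → ℂ} (I : BInv h K Ω a d)
    (H : UQ h k ki E F) (ζ η : ℂ) (hk : k Ω = exp η • Ω) (hE : E Ω = 0)
    (hc : ∀ u, Ent (K u) (Subalgebra.centralizer ℂ {k, ki, E, F})) :
    BInv h (fun u => Lx h k ki E F (u-ζ) * K u * Lx' h k ki E F (u+ζ)) Ω
      (fun u => sinh (u+η-ζ) * sinh (u+η+ζ) * a u) (fun u => sinh (u-η-ζ) * sinh (u-η+ζ) * d u) := by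
  have hki : ki Ω = exp (-η) • Ω := by
    have : ki (k Ω) = Ω := by rw [← Module.End.mul_apply, H.kik]; rfl
    rw [hk, map_smul] at this
    rw [← this, smul_smul, ← Complex.exp_add]; simp [this]
  have cen : ∀ X : Module.End ℂ V, X ∈ ({k, ki, E, F} : Set (Module.End ℂ V)) → ∀ u i j x,
      X (K u i j x) = K u i j (X x) := by
    intro X hX u i j x
    have := (Subalgebra.mem_centralizer_iff ℂ).1 (hc u i j) X hX
    exact congrArg (fun T => T x) this
  have ck := cen k (by simp)
  have cki := cen ki (by simp)
  have cE := cen E (by simp)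
  have cF := cen F (by simp)
  have hsub : ∀ u, ({k, ki, E, F} : Set (Module.End ℂ V)) ⊆
      (Subalgebra.centralizer ℂ (Set.range fun ij : Fin 2 × Fin 2 => K u ij.1 ij.2) : Subalgebra ℂ (Module.End ℂ V)) := by
    intro u X hX
    rw [SetLike.mem_coe, Subalgebra.mem_centralizer_iff]
    rintro _ ⟨⟨i, j⟩, rfl⟩
    exact ((Subalgebra.mem_centralizer_iff ℂ).1 (hc u i j) X hX).symm
  have EFv : E (F Ω) = ((exp η^2 - exp (-η)^2)/2) • Ω := by
    have := congrArg (fun T => T Ω) H.EF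
    simp only [Module.End.mul_apply, LinearMap.add_apply, LinearMap.smul_apply, LinearMap.sub_apply, hE, map_zero, hk, hki,
      map_smul, smul_smul] at this
    rw [this]; module
  have kiF : ∀ x, ki (F (k x)) = exp h • F x := by
    intro x
    have e1 : k (F x) = (exp h)⁻¹ • F (k x) := congrArg (fun T => T x) H.kF
    have e2 : F (k x) = exp h • k (F x) := by rw [e1, smul_smul, mul_inv_cancel₀ (exp_ne_zero h), one_smul]
    rw [e2, map_smul, ← Module.End.mul_apply, H.kik]; rfl
  refine ⟨RE_dress (lax_pair H ζ) I.re ?_ ?_, ((nice_Lx ζ).mul I.nice).mul (nice_Lx' ζ), ?_, ?_, ?_⟩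
  · intro u v i j p q
    have := ent_Lx (h := h) (u - ζ) (hsub v) i j
    exact ((Subalgebra.mem_centralizer_iff ℂ).1 this _ ⟨(p,q), rfl⟩).symm
  · intro u v i j p q
    have := ent_Lx' (h := h) (u + ζ) (hsub v) i j
    exact ((Subalgebra.mem_centralizer_iff ℂ).1 this _ ⟨(p,q), rfl⟩).symm
  all_goals
    intro u hu
    have i1 := I.va u hu
    have i2 := I.vc u hu
    have i3 := I.vd u hu
    have c01 : ∀ x, Lx h k ki E F (u - h/2 - ζ) 1 0 (K (u-h/2) 0 1 x) = K (u-h/2) 0 1 (Lx h k ki E F (u - h/2 - ζ) 1 0 x) := by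
      intro x
      simp only [Lx, Matrix.of_apply, Matrix.cons_val_one, Matrix.cons_val_zero, LinearMap.smul_apply,
        Module.End.mul_apply, map_smul, cki, cE]
    have l00 : Lx h k ki E F (u - h/2 - ζ) 0 0 Ω = sinh (u-ζ+η) • Ω := by
      simp only [Lx, Matrix.of_apply, Matrix.cons_val_zero, LinearMap.smul_apply, LinearMap.sub_apply, hk, hki, smul_smul]
      rw [← sub_smul]; congr 1
      rw [sinh_fx, show u - h/2 - ζ + h/2 = u - ζ by ring, Complex.exp_add, Complex.exp_neg, Complex.exp_neg, mul_inv]; ring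
    have l11 : Lx h k ki E F (u - h/2 - ζ) 1 1 Ω = sinh (u-ζ-η) • Ω := by
      simp only [Lx, Matrix.of_apply, Matrix.cons_val_zero, Matrix.cons_val_one, LinearMap.smul_apply, LinearMap.sub_apply, hk, hki, smul_smul]
      rw [← sub_smul]; congr 1
      rw [sinh_fx, show u - h/2 - ζ + h/2 = u - ζ by ring, sub_eq_add_neg (u-ζ) η, Complex.exp_add, Complex.exp_neg, Complex.exp_neg, mul_inv, inv_inv]; ring
    have l10 : Lx h k ki E F (u - h/2 - ζ) 1 0 Ω = 0 := by
      simp only [Lx, Matrix.of_apply, Matrix.cons_val_zero, Matrix.cons_val_one, LinearMap.smul_apply, Module.End.mul_apply, hki, map_smul, hE, smul_zero]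
    have lF : Lx h k ki E F (u - h/2 - ζ) 1 0 (F (k Ω)) = (exp (-(u-ζ)) * exp h * ((exp η^2 - exp (-η)^2)/2)) • Ω := by
      simp only [Lx, Matrix.of_apply, Matrix.cons_val_zero, Matrix.cons_val_one, LinearMap.smul_apply, Module.End.mul_apply, kiF, map_smul, EFv, smul_smul]
      rw [show u - h/2 - ζ + h/2 = u - ζ by ring]; congr 1; ring
    have r00 : Lx' h k ki E F (u - h/2 + ζ) 0 0 Ω = sinh (u+ζ+η) • Ω := by
      simp only [Lx', Matrix.of_apply, Matrix.cons_val_zero, LinearMap.smul_apply, LinearMap.sub_apply, hk, hki, smul_smul]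
      rw [← sub_smul]; congr 1
      rw [sinh_fx, show u - h/2 + ζ + h/2 = u + ζ by ring, Complex.exp_add (u+ζ), Complex.exp_neg, Complex.exp_neg, mul_inv]; ring
    have r11 : Lx' h k ki E F (u - h/2 + ζ) 1 1 Ω = sinh (u+ζ-η) • Ω := by
      simp only [Lx', Matrix.of_apply, Matrix.cons_val_zero, Matrix.cons_val_one, LinearMap.smul_apply, LinearMap.sub_apply, hk, hki, smul_smul]
      rw [← sub_smul]; congr 1
      rw [sinh_fx, show u - h/2 + ζ + h/2 = u + ζ by ring, sub_eq_add_neg (u+ζ) η, Complex.exp_add (u+ζ), Complex.exp_neg, Complex.exp_neg, mul_inv, inv_inv]; ring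
    have r10 : Lx' h k ki E F (u - h/2 + ζ) 1 0 Ω = 0 := by
      simp only [Lx', Matrix.of_apply, Matrix.cons_val_zero, Matrix.cons_val_one, LinearMap.smul_apply, Module.End.mul_apply, map_zero, hE, smul_zero]
    have r01 : Lx' h k ki E F (u - h/2 + ζ) 0 1 Ω = (sinh h * exp (-(u+ζ))) • F (k Ω) := by
      simp only [Lx', Matrix.of_apply, Matrix.cons_val_zero, Matrix.cons_val_one, LinearMap.smul_apply, Module.End.mul_apply]
      rw [show u - h/2 + ζ + h/2 = u + ζ by ring]
    have k00 : K (u-h/2) 0 0 (F (k Ω)) = a u • F (k Ω) := by rw [← cF, ← ck, i1, map_smul, map_smul]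
    have k10 : K (u-h/2) 1 0 (F (k Ω)) = 0 := by rw [← cF, ← ck, i2, map_zero, map_zero]
    simp only [Matrix.mul_apply, Fin.sum_univ_two, add_mul, LinearMap.add_apply, Module.End.mul_apply,
      r00, r01, r10, r11, map_smul, map_zero, k00, k10, i1, i2, i3, lF, l00, l11, l10, smul_zero, add_zero, zero_add,
      smul_smul, c01]
  · rw [show u+η-ζ = u-ζ+η by ring, show u+η+ζ = u+ζ+η by ring]; congr 1; ring
  · rw [← add_smul]; congr 1
    rw [show u-ζ-η = u-η-ζ by ring, show u+ζ-η = u-η+ζ by ring]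
    linear_combination (a u) * e_vd (h := h) (ζ := ζ) (η := η) hu
end inv

section conc
variable {N : ℕ}

lemma bigOp_ket (t : ℕ → Conf N → ℕ → H2b N) (n : ℕ) (f : Conf N) (m : ℕ) :
    bigOp t (ket2 n f m) = t n f m := by
  simp [bigOp, ket2]

lemma ket_ext {S T : Module.End ℂ (H2b N)} (H : ∀ n f m, S (ket2 n f m) = T (ket2 n f m)) : S = T := by
  refine Finsupp.lhom_ext' fun p => LinearMap.ext_ring ?_
  obtain ⟨n, f, m⟩ := p
  exact H n f m

lemma lOp_exp (α x c : ℂ) (n : ℕ) (f : Conf N) (m : ℕ) :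
    lOp (gExp α x c) (ket2 n f m) = exp (x + c * (α - 1 - 2 * (n:ℂ))) • ket2 n f m := by
  rw [lOp, bigOp_ket, gExp, Finsupp.mapDomain_smul, Finsupp.mapDomain_single, ket2]
lemma lOp_sinh (α x c : ℂ) (n : ℕ) (f : Conf N) (m : ℕ) :
    lOp (gSinh α x c) (ket2 n f m) = sinh (x + c * (α - 1 - 2 * (n:ℂ))) • ket2 n f m := by
  rw [lOp, bigOp_ket, gSinh, Finsupp.mapDomain_smul, Finsupp.mapDomain_single, ket2]
lemma lOp_F (n : ℕ) (f : Conf N) (m : ℕ) : lOp gF (ket2 n f m) = ket2 (n+1) f m := by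
  rw [lOp, bigOp_ket, gF, Finsupp.mapDomain_single, ket2]
lemma qnum_zero (h : ℂ) : qnum h 0 = 0 := by simp [qnum]
lemma lOp_E (h α : ℂ) (n : ℕ) (f : Conf N) (m : ℕ) :
    lOp (gE h α) (ket2 n f m) = (qnum h (n:ℂ) * qnum h (α - (n:ℂ))) • ket2 (n-1) f m := by
  rw [lOp, bigOp_ket, gE]
  split_ifs with hn
  · subst hn; simp [qnum_zero]
  · rw [Finsupp.mapDomain_smul, Finsupp.mapDomain_single, ket2]
lemma rOp_exp (α x c : ℂ) (n : ℕ) (f : Conf N) (m : ℕ) :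
    rOp (gExp α x c) (ket2 n f m) = exp (x + c * (α - 1 - 2 * (m:ℂ))) • ket2 n f m := by
  rw [rOp, bigOp_ket, gExp, Finsupp.mapDomain_smul, Finsupp.mapDomain_single, ket2]
lemma rOp_sinh (α x c : ℂ) (n : ℕ) (f : Conf N) (m : ℕ) :
    rOp (gSinh α x c) (ket2 n f m) = sinh (x + c * (α - 1 - 2 * (m:ℂ))) • ket2 n f m := by
  rw [rOp, bigOp_ket, gSinh, Finsupp.mapDomain_smul, Finsupp.mapDomain_single, ket2]
lemma rOp_F (n : ℕ) (f : Conf N) (m : ℕ) : rOp gF (ket2 n f m) = ket2 n f (m+1) := by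
  rw [rOp, bigOp_ket, gF, Finsupp.mapDomain_single, ket2]
lemma rOp_E (h α : ℂ) (n : ℕ) (f : Conf N) (m : ℕ) :
    rOp (gE h α) (ket2 n f m) = (qnum h (m:ℂ) * qnum h (α - (m:ℂ))) • ket2 n f (m-1) := by
  rw [rOp, bigOp_ket, gE]
  split_ifs with hn
  · subst hn; simp [qnum_zero]
  · rw [Finsupp.mapDomain_smul, Finsupp.mapDomain_single, ket2]

lemma qnum_id (h α n : ℂ) (hq : exp h ^ 2 ≠ 1) :
    sinh h * (qnum h (n+1) * qnum h (α - (n+1))) = sinh h * (qnum h n * qnum h (α - n)) +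
      2⁻¹ * (exp (h/2 * (α - 1 - 2*n)) * exp (h/2 * (α - 1 - 2*n)) - exp (-(h/2) * (α - 1 - 2*n)) * exp (-(h/2) * (α - 1 - 2*n))) := by
  have n1 := exp_ne_zero h
  have n2 := exp_ne_zero (h*n)
  have n3 := exp_ne_zero (h*α)
  have n4 : exp h ^ 2 - 1 ≠ 0 := sub_ne_zero.2 hq
  have q : exp h - (exp h)⁻¹ ≠ 0 := by
    intro e; apply n4
    field_simp at e; simpa using e
  rw [← Complex.exp_add, ← Complex.exp_add]
  rw [show h/2 * (α - 1 - 2*n) + h/2 * (α - 1 - 2*n) = h*α - h - (h*n + h * n) by ring,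
    show -(h/2) * (α - 1 - 2*n) + -(h/2) * (α - 1 - 2*n) = -(h*α - h - (h*n + h * n)) by ring]
  simp only [qnum, sinh_fx]
  rw [show h * (n+1) = h*n+h by ring, show h * (α - (n+1)) = h * α - (h*n+h) by ring, show h * (α - n) = h * α - h*n by ring]
  simp only [Complex.exp_neg, Complex.exp_add, Complex.exp_sub]
  field_simp
  ring

lemma verma_UQ {V ι : Type*} [AddCommGroup V] [Module ℂ V] (b : ℕ → ι → V)
    (bext : ∀ S T : Module.End ℂ V, (∀ n i, S (b n i) = T (b n i)) → S = T) (h α : ℂ) (hq : exp h ^ 2 ≠ 1)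
    (k ki E F : Module.End ℂ V)
    (hk : ∀ n i, k (b n i) = exp (h/2 * (α - 1 - 2 * (n:ℂ))) • b n i)
    (hki : ∀ n i, ki (b n i) = exp (-(h/2) * (α - 1 - 2 * (n:ℂ))) • b n i)
    (hE : ∀ n i, E (b n i) = (sinh h * (qnum h (n:ℂ) * qnum h (α - (n:ℂ)))) • b (n-1) i)
    (hF : ∀ n i, F (b n i) = b (n+1) i) : UQ h k ki E F := by
  refine ⟨bext _ _ ?_, bext _ _ ?_, bext _ _ ?_, bext _ _ ?_, bext _ _ ?_⟩ <;> intro n i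
  · simp only [Module.End.mul_apply, hk, hki, map_smul, smul_smul, ← Complex.exp_add, Module.End.one_apply]
    convert one_smul ℂ _
    rw [← Complex.exp_zero]; congr 1; ring
  · simp only [Module.End.mul_apply, hk, hki, map_smul, smul_smul, ← Complex.exp_add, Module.End.one_apply]
    convert one_smul ℂ _
    rw [← Complex.exp_zero]; congr 1; ring
  · simp only [Module.End.mul_apply, LinearMap.smul_apply, hk, hE, map_smul, smul_smul]
    rcases n with _ | n
    · simp [qnum_zero]
    · congr 1
      rw [Nat.add_sub_cancel, show h/2 * (α - 1 - 2 * (n:ℂ)) = h + h/2 * (α - 1 - 2 * ((n+1:ℕ):ℂ)) by push_cast; ring,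
        Complex.exp_add]; ring
  · simp only [Module.End.mul_apply, LinearMap.smul_apply, hk, hF, map_smul, smul_smul, ← Complex.exp_neg, ← Complex.exp_add]
    congr 2; push_cast; ring
  · simp only [Module.End.mul_apply, LinearMap.smul_apply, LinearMap.add_apply, LinearMap.sub_apply, hk, hki, hE, hF, map_smul, smul_smul]
    rw [Nat.add_sub_cancel]
    have e : (sinh h * (qnum h (n:ℂ) * qnum h (α - (n:ℂ)))) • b (n-1+1) i = (sinh h * (qnum h (n:ℂ) * qnum h (α - (n:ℂ)))) • b n i := by
      rcases n with _ | n
      · simp [qnum_zero]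
      · rfl
    rw [e, ← sub_smul, smul_smul, ← add_smul]
    congr 1
    push_cast
    exact qnum_id h α n hq

variable (N) in
def kl (h α : ℂ) : Module.End ℂ (H2b N) := lOp (gExp α 0 (h/2))
variable (N) in
def kil (h α : ℂ) : Module.End ℂ (H2b N) := lOp (gExp α 0 (-(h/2)))
variable (N) in
def El (h α : ℂ) : Module.End ℂ (H2b N) := sinh h • lOp (gE h α)
variable (N) in
def Fl : Module.End ℂ (H2b N) := lOp gF
variable (N) in
def kr (h α : ℂ) : Module.End ℂ (H2b N) := rOp (gExp α 0 (h/2))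
variable (N) in
def kir (h α : ℂ) : Module.End ℂ (H2b N) := rOp (gExp α 0 (-(h/2)))
variable (N) in
def Er (h α : ℂ) : Module.End ℂ (H2b N) := sinh h • rOp (gE h α)
variable (N) in
def Fr : Module.End ℂ (H2b N) := rOp gF

lemma kl_ket (h α : ℂ) (n : ℕ) (f : Conf N) (m : ℕ) : kl N h α (ket2 n f m) = exp (h/2 * (α - 1 - 2 * (n:ℂ))) • ket2 n f m := by
  rw [kl, lOp_exp, zero_add]
lemma kil_ket (h α : ℂ) (n : ℕ) (f : Conf N) (m : ℕ) : kil N h α (ket2 n f m) = exp (-(h/2) * (α - 1 - 2 * (n:ℂ))) • ket2 n f m := by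
  rw [kil, lOp_exp, zero_add]
lemma El_ket (h α : ℂ) (n : ℕ) (f : Conf N) (m : ℕ) : El N h α (ket2 n f m) = (sinh h * (qnum h (n:ℂ) * qnum h (α - (n:ℂ)))) • ket2 (n-1) f m := by
  rw [El, LinearMap.smul_apply, lOp_E, smul_smul]
lemma Fl_ket (n : ℕ) (f : Conf N) (m : ℕ) : Fl N (ket2 n f m) = ket2 (n+1) f m := by
  rw [Fl, lOp_F]
lemma kr_ket (h α : ℂ) (n : ℕ) (f : Conf N) (m : ℕ) : kr N h α (ket2 n f m) = exp (h/2 * (α - 1 - 2 * (m:ℂ))) • ket2 n f m := by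
  rw [kr, rOp_exp, zero_add]
lemma kir_ket (h α : ℂ) (n : ℕ) (f : Conf N) (m : ℕ) : kir N h α (ket2 n f m) = exp (-(h/2) * (α - 1 - 2 * (m:ℂ))) • ket2 n f m := by
  rw [kir, rOp_exp, zero_add]
lemma Er_ket (h α : ℂ) (n : ℕ) (f : Conf N) (m : ℕ) : Er N h α (ket2 n f m) = (sinh h * (qnum h (m:ℂ) * qnum h (α - (m:ℂ)))) • ket2 n f (m-1) := by
  rw [Er, LinearMap.smul_apply, rOp_E, smul_smul]
lemma Fr_ket (n : ℕ) (f : Conf N) (m : ℕ) : Fr N (ket2 n f m) = ket2 n f (m+1) := by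
  rw [Fr, rOp_F]

lemma UQ_l (h α : ℂ) (hq : exp h ^ 2 ≠ 1) : UQ h (kl N h α) (kil N h α) (El N h α) (Fl N) :=
  verma_UQ (fun n (i : Conf N × ℕ) => ket2 n i.1 i.2) (fun S T H => ket_ext fun n f m => H n (f, m)) h α hq _ _ _ _
    (fun n i => kl_ket h α n i.1 i.2) (fun n i => kil_ket h α n i.1 i.2) (fun n i => El_ket h α n i.1 i.2) (fun n i => Fl_ket n i.1 i.2)
lemma UQ_r (h α : ℂ) (hq : exp h ^ 2 ≠ 1) : UQ h (kr N h α) (kir N h α) (Er N h α) (Fr N) :=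
  verma_UQ (fun n (i : ℕ × Conf N) => ket2 i.1 i.2 n) (fun S T H => ket_ext fun n f m => H m (n, f)) h α hq _ _ _ _
    (fun n i => kr_ket h α i.1 i.2 n) (fun n i => kir_ket h α i.1 i.2 n) (fun n i => Er_ket h α i.1 i.2 n) (fun n i => Fr_ket i.1 i.2 n)

def siteM (j : Fin N) (c : Fin 2 → ℂ) (φ : Fin 2 → Fin 2) : Module.End ℂ (H2b N) :=
  bigOp fun n f m => c (f j) • ket2 n (Function.update f j (φ (f j))) m

lemma siteM_ket (j : Fin N) (c φ) (n : ℕ) (f : Conf N) (m : ℕ) :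
    siteM j c φ (ket2 n f m) = c (f j) • ket2 n (Function.update f j (φ (f j))) m := by
  rw [siteM, bigOp_ket]

lemma siteM_mul (j : Fin N) (c φ c' φ') :
    siteM j c φ * siteM j c' φ' = siteM j (fun s => c' s * c (φ' s)) (fun s => φ (φ' s)) := by
  refine ket_ext fun n f m => ?_
  simp [siteM_ket, smul_smul]

lemma siteM_comm (i j : Fin N) (hij : i ≠ j) (c φ c' φ') :
    siteM i c φ * siteM j c' φ' = siteM j c' φ' * siteM i c φ := by
  refine ket_ext fun n f m => ?_
  simp only [Module.End.mul_apply, siteM_ket, map_smul, smul_smul, Function.update_of_ne hij, Function.update_of_ne hij.symm]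
  rw [mul_comm, Function.update_comm hij]

def ks (h : ℂ) (j : Fin N) : Module.End ℂ (H2b N) := siteM j ![exp (h/2), exp (-(h/2))] id
def kis (h : ℂ) (j : Fin N) : Module.End ℂ (H2b N) := siteM j ![exp (-(h/2)), exp (h/2)] id
def Es (h : ℂ) (j : Fin N) : Module.End ℂ (H2b N) := siteM j ![0, sinh h] (fun _ => 0)
def Fs (j : Fin N) : Module.End ℂ (H2b N) := siteM j ![1, 0] (fun _ => 1)

lemma fin2_cases (s : Fin 2) : s = 0 ∨ s = 1 := by fin_cases s <;> simp

lemma upd_self {f : Conf N} {j : Fin N} {s : Fin 2} (hf : f j = s) : Function.update f j s = f := by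
  rw [← hf]; exact Function.update_eq_self j f

lemma UQ_s (h : ℂ) (j : Fin N) : UQ h (ks h j) (kis h j) (Es h j) (Fs j) := by
  have hh : exp h = exp (h/2)^2 := by rw [← e2]; congr 1; ring
  have n1 := exp_ne_zero (h/2)
  refine ⟨ket_ext ?_, ket_ext ?_, ket_ext ?_, ket_ext ?_, ket_ext ?_⟩ <;> intro n f m <;>
    rcases fin2_cases (f j) with hf | hf <;>
    simp [ks, kis, Es, Fs, siteM_mul, siteM_ket, hf, upd_self hf, smul_smul, hh, Complex.exp_neg, sinh_fx h, ← sub_smul, ← add_smul] <;>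
    try (congr 1; field_simp)
  rw [show exp (h/2)^4 - 1 + (1 - exp (h/2)^4) = 0 by ring, zero_div, zero_smul]

lemma lSinhP (h α x : ℂ) : lOp (gSinh α x (h/2)) = (exp x/2) • kl N h α - (exp (-x)/2) • kil N h α := by
  refine ket_ext fun n f m => ?_
  rw [lOp_sinh, LinearMap.sub_apply, LinearMap.smul_apply, LinearMap.smul_apply, kl_ket, kil_ket, smul_smul, smul_smul, ← sub_smul]
  congr 1
  rw [Complex.sinh, neg_add, neg_mul, Complex.exp_add, Complex.exp_add]; ring
lemma lSinhM (h α x : ℂ) : lOp (gSinh α x (-(h/2))) = (exp x/2) • kil N h α - (exp (-x)/2) • kl N h α := by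
  refine ket_ext fun n f m => ?_
  rw [lOp_sinh, LinearMap.sub_apply, LinearMap.smul_apply, LinearMap.smul_apply, kl_ket, kil_ket, smul_smul, smul_smul, ← sub_smul]
  congr 1
  rw [Complex.sinh, neg_add, neg_mul, neg_neg, Complex.exp_add, Complex.exp_add]; ring
lemma lExpP (h α x : ℂ) : lOp (gExp α x (h/2)) = exp x • kl N h α := by
  refine ket_ext fun n f m => ?_
  rw [lOp_exp, LinearMap.smul_apply, kl_ket, smul_smul, Complex.exp_add]
lemma lExpM (h α x : ℂ) : lOp (gExp α x (-(h/2))) = exp x • kil N h α := by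
  refine ket_ext fun n f m => ?_
  rw [lOp_exp, LinearMap.smul_apply, kil_ket, smul_smul, Complex.exp_add]

lemma R0Vl_eq (h α w : ℂ) : R0Vl N h α w = Lx h (kl N h α) (kil N h α) (El N h α) (Fl N) w := by
  simp only [R0Vl, Lx, lSinhP, lSinhM, lExpP, lExpM, El, Fl, smul_mul_assoc, mul_smul_comm, smul_smul]
  rw [show -w - h/2 = -(w+h/2) by ring, mul_comm (sinh h) (exp (-(w+h/2)))]
lemma RVl0_eq (h α w : ℂ) : RVl0 N h α w = Lx' h (kl N h α) (kil N h α) (El N h α) (Fl N) w := by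
  simp only [RVl0, Lx', lSinhP, lSinhM, lExpP, lExpM, El, Fl, smul_mul_assoc, mul_smul_comm, smul_smul]
  rw [show -w - h/2 = -(w+h/2) by ring, mul_comm (sinh h) (exp (w+h/2))]

lemma rSinhP (h α x : ℂ) : rOp (gSinh α x (h/2)) = (exp x/2) • kr N h α - (exp (-x)/2) • kir N h α := by
  refine ket_ext fun n f m => ?_
  rw [rOp_sinh, LinearMap.sub_apply, LinearMap.smul_apply, LinearMap.smul_apply, kr_ket, kir_ket, smul_smul, smul_smul, ← sub_smul]
  congr 1
  rw [Complex.sinh, neg_add, neg_mul, Complex.exp_add, Complex.exp_add]; ring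
lemma rSinhM (h α x : ℂ) : rOp (gSinh α x (-(h/2))) = (exp x/2) • kir N h α - (exp (-x)/2) • kr N h α := by
  refine ket_ext fun n f m => ?_
  rw [rOp_sinh, LinearMap.sub_apply, LinearMap.smul_apply, LinearMap.smul_apply, kr_ket, kir_ket, smul_smul, smul_smul, ← sub_smul]
  congr 1
  rw [Complex.sinh, neg_add, neg_mul, neg_neg, Complex.exp_add, Complex.exp_add]; ring
lemma rExpP (h α x : ℂ) : rOp (gExp α x (h/2)) = exp x • kr N h α := by
  refine ket_ext fun n f m => ?_
  rw [rOp_exp, LinearMap.smul_apply, kr_ket, smul_smul, Complex.exp_add]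
lemma rExpM (h α x : ℂ) : rOp (gExp α x (-(h/2))) = exp x • kir N h α := by
  refine ket_ext fun n f m => ?_
  rw [rOp_exp, LinearMap.smul_apply, kir_ket, smul_smul, Complex.exp_add]

lemma R0Vr_eq (h α w : ℂ) : R0Vr N h α w = Lx h (kr N h α) (kir N h α) (Er N h α) (Fr N) w := by
  simp only [R0Vr, Lx, rSinhP, rSinhM, rExpP, rExpM, Er, Fr, smul_mul_assoc, mul_smul_comm, smul_smul]
  rw [show -w - h/2 = -(w+h/2) by ring, mul_comm (sinh h) (exp (-(w+h/2)))]
lemma RVr0_eq (h α w : ℂ) : RVr0 N h α w = Lx' h (kr N h α) (kir N h α) (Er N h α) (Fr N) w := by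
  simp only [RVr0, Lx', rSinhP, rSinhM, rExpP, rExpM, Er, Fr, smul_mul_assoc, mul_smul_comm, smul_smul]
  rw [show -w - h/2 = -(w+h/2) by ring, mul_comm (sinh h) (exp (w+h/2))]


lemma ks_ket0 (h : ℂ) (j : Fin N) {n : ℕ} {f : Conf N} {m : ℕ} (hf : f j = 0) : ks h j (ket2 n f m) = exp (h/2) • ket2 n f m := by
  simp [ks, siteM_ket, hf, upd_self hf]
lemma ks_ket1 (h : ℂ) (j : Fin N) {n : ℕ} {f : Conf N} {m : ℕ} (hf : f j = 1) : ks h j (ket2 n f m) = exp (-(h/2)) • ket2 n f m := by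
  simp [ks, siteM_ket, hf, upd_self hf]
lemma kis_ket0 (h : ℂ) (j : Fin N) {n : ℕ} {f : Conf N} {m : ℕ} (hf : f j = 0) : kis h j (ket2 n f m) = exp (-(h/2)) • ket2 n f m := by
  simp [kis, siteM_ket, hf, upd_self hf]
lemma kis_ket1 (h : ℂ) (j : Fin N) {n : ℕ} {f : Conf N} {m : ℕ} (hf : f j = 1) : kis h j (ket2 n f m) = exp (h/2) • ket2 n f m := by
  simp [kis, siteM_ket, hf, upd_self hf]
lemma Es_ket0 (h : ℂ) (j : Fin N) {n : ℕ} {f : Conf N} {m : ℕ} (hf : f j = 0) : Es h j (ket2 n f m) = 0 := by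
  simp [Es, siteM_ket, hf]
lemma Es_ket1 (h : ℂ) (j : Fin N) {n : ℕ} {f : Conf N} {m : ℕ} (hf : f j = 1) : Es h j (ket2 n f m) = sinh h • ket2 n (Function.update f j 0) m := by
  simp [Es, siteM_ket, hf]
lemma Fs_ket0 (j : Fin N) {n : ℕ} {f : Conf N} {m : ℕ} (hf : f j = 0) : Fs j (ket2 n f m) = ket2 n (Function.update f j 1) m := by
  simp [Fs, siteM_ket, hf]
lemma Fs_ket1 (j : Fin N) {n : ℕ} {f : Conf N} {m : ℕ} (hf : f j = 1) : Fs j (ket2 n f m) = 0 := by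
  simp [Fs, siteM_ket, hf]

lemma R0i_eq (h w : ℂ) (j : Fin N) : R0i N h w j = Lx h (ks h j) (kis h j) (Es h j) (Fs j) w := by
  have hh : exp h = exp (h/2)^2 := by rw [← e2]; congr 1; ring
  have n1 := exp_ne_zero (h/2)
  have n2 := exp_ne_zero w
  refine Matrix.ext fun a b => ket_ext fun n f m => ?_
  rcases fin2_cases (f j) with hf | hf <;> fin_cases a <;> fin_cases b <;>
    simp [R0i, siteAux, bigOp_ket, Rsc, Fin.sum_univ_two, Lx, hf, upd_self hf, ks_ket0, ks_ket1, kis_ket0, kis_ket1, Es_ket0, Es_ket1, Fs_ket0, Fs_ket1,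
      smul_smul, ← sub_smul, - neg_add_rev] <;>
    congr 1 <;> simp only [sinh_fx, Complex.exp_neg, Complex.exp_add, hh] <;> field_simp
lemma Ri0_eq (h w : ℂ) (j : Fin N) : Ri0 N h w j = Lx' h (ks h j) (kis h j) (Es h j) (Fs j) w := by
  have hh : exp h = exp (h/2)^2 := by rw [← e2]; congr 1; ring
  have n1 := exp_ne_zero (h/2)
  have n2 := exp_ne_zero w
  refine Matrix.ext fun a b => ket_ext fun n f m => ?_
  rcases fin2_cases (f j) with hf | hf <;> fin_cases a <;> fin_cases b <;>
    simp [Ri0, siteAux, bigOp_ket, Rsc, Fin.sum_univ_two, Lx', hf, upd_self hf, ks_ket0, ks_ket1, kis_ket0, kis_ket1, Es_ket0, Es_ket1, Fs_ket0, Fs_ket1,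
      smul_smul, ← sub_smul, - neg_add_rev] <;>
    congr 1 <;> simp only [sinh_fx, Complex.exp_neg, Complex.exp_add, hh] <;> field_simp

/-- generator sets -/
def Gl (N : ℕ) (h α : ℂ) : Set (Module.End ℂ (H2b N)) := {kl N h α, kil N h α, El N h α, Fl N}
def Gr (N : ℕ) (h α : ℂ) : Set (Module.End ℂ (H2b N)) := {kr N h α, kir N h α, Er N h α, Fr N}
def Gs {N : ℕ} (h : ℂ) (j : Fin N) : Set (Module.End ℂ (H2b N)) := {ks h j, kis h j, Es h j, Fs j}

lemma Gs_site {h : ℂ} {j : Fin N} {X} (hX : X ∈ Gs h j) : ∃ c φ, X = siteM j c φ := by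
  rcases hX with rfl | rfl | rfl | rfl <;> exact ⟨_, _, rfl⟩
lemma comm_ss {h : ℂ} {i j : Fin N} (hij : i ≠ j) {X Y} (hX : X ∈ Gs h i) (hY : Y ∈ Gs h j) : X * Y = Y * X := by
  obtain ⟨c, φ, rfl⟩ := Gs_site hX
  obtain ⟨c', φ', rfl⟩ := Gs_site hY
  exact siteM_comm i j hij _ _ _ _
lemma comm_ls {h α : ℂ} {j : Fin N} {X Y} (hX : X ∈ Gl N h α) (hY : Y ∈ Gs h j) : X * Y = Y * X := by
  obtain ⟨c', φ', rfl⟩ := Gs_site hY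
  rcases hX with rfl | rfl | rfl | rfl <;> refine ket_ext fun n f m => ?_ <;>
    simp only [Module.End.mul_apply, siteM_ket, kl_ket, kil_ket, El_ket, Fl_ket, map_smul, smul_smul, mul_comm]
lemma comm_rs {h α : ℂ} {j : Fin N} {X Y} (hX : X ∈ Gr N h α) (hY : Y ∈ Gs h j) : X * Y = Y * X := by
  obtain ⟨c', φ', rfl⟩ := Gs_site hY
  rcases hX with rfl | rfl | rfl | rfl <;> refine ket_ext fun n f m => ?_ <;>
    simp only [Module.End.mul_apply, siteM_ket, kr_ket, kir_ket, Er_ket, Fr_ket, map_smul, smul_smul, mul_comm]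
lemma comm_lr {h α h' α' : ℂ} {X Y} (hX : X ∈ Gl N h α) (hY : Y ∈ Gr N h' α') : X * Y = Y * X := by
  rcases hX with rfl | rfl | rfl | rfl <;> rcases hY with rfl | rfl | rfl | rfl <;> refine ket_ext fun n f m => ?_ <;>
    simp only [Module.End.mul_apply, kr_ket, kir_ket, Er_ket, Fr_ket, kl_ket, kil_ket, El_ket, Fl_ket, map_smul, smul_smul, mul_comm]
end conc

section fin

lemma c1 {h u v : ℂ} (n1 : sinh (2*u) ≠ 0) (n2 : sinh (2*v) ≠ 0) (n3 : sinh (u-v) ≠ 0) (n4 : sinh (u+v) ≠ 0) :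
    sinh (2*u+h)/sinh (2*u) * g1 h u v + exp (-h) * g2' h u v =
      sinh (2*u+h) * sinh h / (sinh (u+v) * sinh (u-v)) * (sinh (2*v-h) / sinh (2*v)) := by
  have key : exp (u-v) * sinh (u+v) + exp (-u-v) * sinh (u-v) = sinh (2*u) := by
    simp only [d_fx, sub_fx, add_fx, Complex.exp_sub, Complex.exp_neg]
    have := exp_ne_zero u; have := exp_ne_zero v
    field_simp; ring
  have ee : exp (-h) * exp (-u-v+h) = exp (-u-v) := by rw [← Complex.exp_add]; congr 1; ring
  have : exp (-h) * g2' h u v = exp (-u-v) * (sinh h * sinh (2*u+h) * sinh (2*v-h)/ (sinh (2*u) * sinh (2*v) * sinh (u+v))) := by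
    rw [g2', ← mul_assoc, ee]
  rw [this, g1]
  field_simp
  linear_combination (sinh (2*u+h) * sinh h * sinh (2*v-h)) * key

lemma c2 {h u v : ℂ} (n1 : sinh (2*u) ≠ 0) (n3 : sinh (u-v) ≠ 0) (n4 : sinh (u+v) ≠ 0) :
    sinh (2*u+h)/sinh (2*u) * g2 h u v + exp (-h) * g1' h u v =
      -(sinh (2*u+h) * sinh h / (sinh (u+v) * sinh (u-v)) * exp (-h)) := by
  have key : exp (u+v) * sinh (u-v) + exp (v-u) * sinh (u+v) = sinh (2*u) := by
    simp only [d_fx, sub_fx, add_fx, Complex.exp_sub, Complex.exp_add]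
    have := exp_ne_zero u; have := exp_ne_zero v
    field_simp; ring
  have ee : exp (u+v-h) = exp (u+v) * exp (-h) := by rw [← Complex.exp_add]; congr 1
  rw [g1', g2, ee]
  field_simp
  linear_combination (-sinh (2*u+h) * sinh h) * key

lemma c3 {h v : ℂ} (n2 : sinh (2*v) ≠ 0) : 1 - kap h v = exp h * (sinh (2*v-h) / sinh (2*v)) := by
  have n := d_nz n2
  have := exp_ne_zero v; have := exp_ne_zero h
  simp only [kap, d_fx, sub_fx, Complex.exp_sub, e2, sinh_fx h]
  field_simp; ring

lemma c4 {h u : ℂ} (n2 : sinh (2*u) ≠ 0) : exp h + exp (-h) * kap h u = sinh (2*u+h) / sinh (2*u) := by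
  have n := d_nz n2
  have := exp_ne_zero u; have := exp_ne_zero h
  simp only [kap, d_fx, add_fx, Complex.exp_sub, Complex.exp_neg, e2, sinh_fx h]
  field_simp; ring

lemma sinh_ev (c u0 : ℂ) : ∀ᶠ u in nhdsWithin u0 {u0}ᶜ, sinh (u + c) ≠ 0 := by
  have hd : HasDerivAt (fun u => sinh (u+c)) (cosh (u0+c)) u0 := by
    simpa using ((hasDerivAt_id u0).add_const c).csinh
  by_cases hs : sinh (u0+c) = 0
  · have hc : cosh (u0+c) ≠ 0 := by
      intro e
      have := Complex.cosh_sq_sub_sinh_sq (u0+c)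
      rw [hs, e] at this; simp at this
    exact hd.eventually_ne hc
  · exact (hd.continuousAt.eventually_ne hs).filter_mono nhdsWithin_le_nhds

theorem eig {ι : Type*} {h : ℂ} {K' : ℂ → Matrix (Fin 2) (Fin 2) (Module.End ℂ (ι →₀ ℂ))} {Ω : ι →₀ ℂ} {a d0 : ℂ → ℂ}
    (I : BInv h K' Ω a (fun u => (1 - kap h u) * d0 u)) (ha : Continuous a) (hd : Continuous d0)
    (M : ℕ) (v : Fin M → ℂ)
    (hgen1 : ∀ m : Fin M, sinh (2 * v m) ≠ 0)
    (hgen2 : ∀ m k : Fin M, m ≠ k → Gn h (v m) (v k))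
    (hBAE : ∀ m : Fin M, a (v m) * ∏ k ∈ Finset.univ.erase m, (sinh (v m - v k - h) * sinh (v m + v k - h))
      = d0 (v m) * ∏ k ∈ Finset.univ.erase m, (sinh (v m - v k + h) * sinh (v m + v k + h)))
    (ψ : ι →₀ ℂ) (hψ : ψ = (((List.finRange M).map fun m => K' (v m - h/2) 0 1).prod) Ω)
    (u : ℂ) (hu : sinh (2*u) ≠ 0) (huv : ∀ m : Fin M, sinh (u - v m) ≠ 0 ∧ sinh (u + v m) ≠ 0) :
    exp h • K' (u-h/2) 0 0 ψ + exp (-h) • K' (u-h/2) 1 1 ψ =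
      (a u * (sinh (2*u+h) / sinh (2*u)) * ∏ m : Fin M, aF h u (v m)
        + d0 u * (sinh (2*u-h) / sinh (2*u)) * ∏ m : Fin M, dF h u (v m)) • ψ := by
  set K : ℂ → Matrix (Fin 2) (Fin 2) (Module.End ℂ (ι →₀ ℂ)) := fun u => K' (u-h/2) with hK
  have re : RE h (fun u => K (u+h/2)) := by
    have := I.re
    simpa [hK] using this
  have gen : ∀ u, sinh (2*u) ≠ 0 → (∀ m, Gn h u (v m)) → exp h • K u 0 0 ψ + exp (-h) • K u 1 1 ψ =
      (a u * (sinh (2*u+h) / sinh (2*u)) * ∏ m : Fin M, aF h u (v m)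
        + d0 u * (sinh (2*u-h) / sinh (2*u)) * ∏ m : Fin M, dF h u (v m)) • ψ := by
    obtain ⟨w, hw⟩ := aba h (fun u => K u 0 0) (fun u => K u 0 1) (fun u => Dt h K u) Ω a (fun u => (1 - kap h u) * d0 u)
      (fun u v g => rel_AB re u v g.2.1 g.2.2.1 g.2.2.2.1)
      (fun u v g => rel_DB re u v g.1 g.2.1 g.2.2.1 g.2.2.2.1 g.2.2.2.2.2)
      (fun u v g => rel_BB re u v g.2.2.2.2.1 g.2.2.2.2.2)
      (fun u hu => I.va u hu)
      (fun u hu => by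
        simp only [Dt, LinearMap.sub_apply, LinearMap.smul_apply, hK]
        rw [I.vd u hu, I.va u hu, smul_smul, ← sub_smul, add_sub_cancel_right])
      M v hgen1 hgen2
    intro u hu hg
    obtain ⟨e1, e2'⟩ := hw u hu hg
    have hψ' : ψ = (((List.finRange M).map fun m => K (v m) 0 1).prod) Ω := hψ
    simp only [← hψ'] at e1 e2'
    have e3 : K u 1 1 ψ = Dt h K u ψ + kap h u • K u 0 0 ψ := by
      simp only [Dt, LinearMap.sub_apply, LinearMap.smul_apply, sub_add_cancel]
    have e4 : exp h • K u 0 0 ψ + exp (-h) • K u 1 1 ψ = (sinh (2*u+h) / sinh (2*u)) • K u 0 0 ψ + exp (-h) • Dt h K u ψ := by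
      rw [e3, ← c4 hu]; module
    rw [e4, e1, e2', smul_add, smul_add, Finset.smul_sum, Finset.smul_sum]
    have e5 : ∀ m, (sinh (2*u+h) / sinh (2*u)) • (g1 h u (v m) * (a (v m) * ∏ k ∈ Finset.univ.erase m, aF h (v m) (v k)) +
            g2 h u (v m) * ((1 - kap h (v m)) * d0 (v m) * ∏ k ∈ Finset.univ.erase m, dF h (v m) (v k))) • K u 0 1 (w m)
          + exp (-h) • (g2' h u (v m) * (a (v m) * ∏ k ∈ Finset.univ.erase m, aF h (v m) (v k)) +
            g1' h u (v m) * ((1 - kap h (v m)) * d0 (v m) * ∏ k ∈ Finset.univ.erase m, dF h (v m) (v k))) • K u 0 1 (w m) = 0 := by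
      intro m
      have hB : a (v m) * ∏ k ∈ Finset.univ.erase m, aF h (v m) (v k) = d0 (v m) * ∏ k ∈ Finset.univ.erase m, dF h (v m) (v k) := by
        simp only [aF, dF, Finset.prod_div_distrib]
        rw [← mul_div_assoc, ← mul_div_assoc, hBAE m]
      have q1 := c1 (h := h) hu (hgen1 m) (hg m).2.2.1 (hg m).2.2.2.1
      have q2 := c2 (h := h) hu (hg m).2.2.1 (hg m).2.2.2.1
      have q3 := c3 (h := h) (hgen1 m)
      have q4 : exp (-h) * exp h = 1 := by rw [← Complex.exp_add]; simp
      rw [smul_smul, smul_smul, ← add_smul]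
      convert zero_smul ℂ _
      rw [mul_assoc (1 - kap h (v m)), ← hB, q3]
      set P := a (v m) * ∏ k ∈ Finset.univ.erase m, aF h (v m) (v k)
      linear_combination P * q1 + (exp h * (sinh (2*v m-h) / sinh (2*v m))) * P * q2
        - sinh (2*u+h) * sinh h / (sinh (u+v m) * sinh (u-v m)) * (sinh (2*v m-h) / sinh (2*v m)) * P * q4
    have e6 := Finset.sum_eq_zero (s := (Finset.univ : Finset (Fin M))) (fun m _ => e5 m)
    rw [Finset.sum_add_distrib] at e6
    rw [add_add_add_comm, e6, add_zero, smul_smul, smul_smul, ← add_smul]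
    congr 1
    rw [c3 hu]
    have q4 : exp (-h) * exp h = 1 := by rw [← Complex.exp_add]; simp
    linear_combination (sinh (2*u-h) / sinh (2*u)) * d0 u * (∏ m : Fin M, dF h u (v m)) * q4
  refine Finsupp.ext fun p => ?_
  set Lf : ℂ → ℂ := fun u => (exp h • K u 0 0 ψ + exp (-h) • K u 1 1 ψ) p with hLf
  set Rf : ℂ → ℂ := fun u => ((a u * (sinh (2*u+h) / sinh (2*u)) * ∏ m : Fin M, aF h u (v m)
        + d0 u * (sinh (2*u-h) / sinh (2*u)) * ∏ m : Fin M, dF h u (v m)) • ψ) p with hRf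
  change Lf u = Rf u
  have cL : Continuous Lf := by
    have k0 : Continuous (fun u => K u 0 0 ψ p) := ((I.nice 0 0).comp (-(h/2))).cont ψ p
    have k1 : Continuous (fun u => K u 1 1 ψ p) := ((I.nice 1 1).comp (-(h/2))).cont ψ p
    have : Continuous (fun u => exp h * K u 0 0 ψ p + exp (-h) * K u 1 1 ψ p) := by fun_prop
    exact this
  have cR : ContinuousAt Rf u := by
    have a1 : ContinuousAt (fun u => ∏ m : Fin M, aF h u (v m)) u := by
      refine tendsto_finsetProd _ fun m _ => ?_
      simp only [aF]
      exact ContinuousAt.div (by fun_prop) (by fun_prop) (mul_ne_zero (huv m).1 (huv m).2)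
    have a2 : ContinuousAt (fun u => ∏ m : Fin M, dF h u (v m)) u := by
      refine tendsto_finsetProd _ fun m _ => ?_
      simp only [dF]
      exact ContinuousAt.div (by fun_prop) (by fun_prop) (mul_ne_zero (huv m).1 (huv m).2)
    have a3 : ContinuousAt (fun u => sinh (2*u+h) / sinh (2*u)) u := ContinuousAt.div (by fun_prop) (by fun_prop) hu
    have a4 : ContinuousAt (fun u => sinh (2*u-h) / sinh (2*u)) u := ContinuousAt.div (by fun_prop) (by fun_prop) hu
    exact (((ha.continuousAt.mul a3).mul a1).add ((hd.continuousAt.mul a4).mul a2)).mul continuousAt_const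
  have ev : ∀ᶠ x in nhdsWithin u {u}ᶜ, Lf x = Rf x := by
    have s1 : ∀ᶠ x in nhdsWithin u {u}ᶜ, sinh (2*x) ≠ 0 := by
      have : ContinuousAt (fun x => sinh (2*x)) u := by fun_prop
      exact (this.eventually_ne hu).filter_mono nhdsWithin_le_nhds
    have s2 : ∀ᶠ x in nhdsWithin u {u}ᶜ, ∀ m, sinh (x + -v m) ≠ 0 := Filter.eventually_all.2 fun m => sinh_ev _ _
    have s3 : ∀ᶠ x in nhdsWithin u {u}ᶜ, ∀ m, sinh (x + v m) ≠ 0 := Filter.eventually_all.2 fun m => sinh_ev _ _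
    have s4 : ∀ᶠ x in nhdsWithin u {u}ᶜ, ∀ m, sinh (x + (-v m + h)) ≠ 0 := Filter.eventually_all.2 fun m => sinh_ev _ _
    have s5 : ∀ᶠ x in nhdsWithin u {u}ᶜ, ∀ m, sinh (x + (v m - h)) ≠ 0 := Filter.eventually_all.2 fun m => sinh_ev _ _
    filter_upwards [s1, s2, s3, s4, s5] with x h1 h2 h3 h4 h5
    have := gen x h1 (fun m => ⟨h1, hgen1 m, h2 m, h3 m, by
      have := h4 m; rwa [← add_assoc] at this, by
      have := h5 m; rwa [← add_sub_assoc] at this⟩)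
    exact congrArg (fun f : ι →₀ ℂ => f p) this
  exact tendsto_nhds_unique_of_eventuallyEq (cL.continuousAt.mono_left nhdsWithin_le_nhds) (cR.mono_left nhdsWithin_le_nhds) ev

variable {N : ℕ}

def Ksite (h αl ζl : ℂ) (l : List (Fin N)) (u : ℂ) : AuxMat N :=
  (l.reverse.map fun i => R0i N h u i).prod *
   (R0Vl N h αl (u - ζl) * 1 * RVl0 N h αl (u + ζl)) * (l.map fun i => Ri0 N h u i).prod

lemma Ksite_snoc (h αl ζl : ℂ) (l : List (Fin N)) (j : Fin N) (u : ℂ) :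
    Ksite h αl ζl (l ++ [j]) u = Lx h (ks h j) (kis h j) (Es h j) (Fs j) (u-0) * Ksite h αl ζl l u *
      Lx' h (ks h j) (kis h j) (Es h j) (Fs j) (u+0) := by
  rw [← R0i_eq, ← Ri0_eq, sub_zero, add_zero]
  simp only [Ksite, List.reverse_append, List.map_append, List.prod_append, List.reverse_singleton, List.map_cons, List.map_nil,
    List.prod_cons, List.prod_nil, mul_one, mul_assoc]

lemma Ksite_ent (h αl ζl : ℂ) (l : List (Fin N)) (C : Subalgebra ℂ (Module.End ℂ (H2b N))) (u : ℂ)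
    (hl : Gl N h αl ⊆ (C : Set _)) (hs : ∀ j ∈ l, Gs h j ⊆ (C : Set _)) : Ent (Ksite h αl ζl l u) C := by
  induction l using List.reverseRecOn with
  | nil =>
    simp only [Ksite, List.reverse_nil, List.map_nil, List.prod_nil, one_mul, mul_one, R0Vl_eq, RVl0_eq]
    exact (ent_Lx _ hl).mul (ent_Lx' _ hl)
  | append_singleton l j ih =>
    rw [Ksite_snoc]
    have h1 := ih (fun i hi => hs i (by simp [hi]))
    have h2 := hs j (by simp)
    exact ((ent_Lx _ h2).mul h1).mul (ent_Lx' _ h2)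

lemma BInv.congr {V : Type*} [AddCommGroup V] [Module ℂ V] {h : ℂ} {K L : ℂ → Matrix (Fin 2) (Fin 2) (Module.End ℂ V)} {Ω : V} {a d b c : ℂ → ℂ}
    (I : BInv h K Ω a d) (e1 : K = L) (e2 : a = b) (e3 : d = c) : BInv h L Ω b c := by
  subst e1 e2 e3; exact I

lemma Dlt_neg (h α ζ u : ℂ) : Dlt h α ζ (-u) = sinh (u - h*(α-1)/2 - ζ) * sinh (u - h*(α-1)/2 + ζ) := by
  rw [Dlt, show -u + h*(α-1)/2 - ζ = -(u - h*(α-1)/2 + ζ) by ring, show -u + h*(α-1)/2 + ζ = -(u - h*(α-1)/2 - ζ) by ring,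
    Complex.sinh_neg, Complex.sinh_neg]; ring

lemma Ksite_inv (h αl ζl : ℂ) (hq : exp h ^ 2 ≠ 1) (l : List (Fin N)) (hl : l.Nodup) :
    BInv h (Ksite h αl ζl l) (vac N) (fun u => sinh (u+h/2)^(2*l.length) * Dlt h αl ζl u)
      (fun u => (1 - kap h u) * (sinh (u-h/2)^(2*l.length) * Dlt h αl ζl (-u))) := by
  induction l using List.reverseRecOn with
  | nil =>
    refine BInv.congr (binv_dress (binv_one h (vac N)) (UQ_l h αl hq) ζl (h*(αl-1)/2) ?_ ?_ (fun u => Ent.one)) ?_ ?_ ?_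
    · rw [vac, kl_ket]; congr 2; push_cast; ring
    · rw [vac, El_ket]; simp [qnum_zero]
    · funext u; simp [Ksite, R0Vl_eq, RVl0_eq]
    · funext u; simp [Dlt]
    · funext u; rw [Dlt_neg]; simp; ring
  | append_singleton l j ih =>
    rw [List.nodup_append] at hl
    obtain ⟨hl1, -, hl2⟩ := hl
    refine BInv.congr (binv_dress (ih hl1) (UQ_s h j) 0 (h/2) ?_ ?_ (fun u => ?_)) ?_ ?_ ?_
    · exact ks_ket0 h j rfl
    · exact Es_ket0 h j rfl
    · refine Ksite_ent h αl ζl l _ u ?_ ?_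
      · intro X hX
        rw [SetLike.mem_coe, Subalgebra.mem_centralizer_iff]
        intro Y hY
        exact (comm_ls hX (j := j) hY).symm
      · intro i hi X hX
        rw [SetLike.mem_coe, Subalgebra.mem_centralizer_iff]
        intro Y hY
        have hij : i ≠ j := hl2 i hi j (by simp)
        exact (comm_ss hij hX hY).symm
    · funext u; rw [Ksite_snoc]
    · funext u; simp only [List.length_append, List.length_singleton, sub_zero, add_zero]; ring
    · funext u; simp only [List.length_append, List.length_singleton, sub_zero, add_zero]; ring

lemma Tcal_inv (h αl αr ζl ζr : ℂ) (hq : exp h ^ 2 ≠ 1) :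
    BInv h (fun u => Tmon N h αl αr ζl ζr u * Tmonhat N h αl αr ζl ζr u) (vac N)
      (fun u => sinh (u+h/2)^(2*N) * Dlt h αl ζl u * Dlt h αr ζr u)
      (fun u => (1 - kap h u) * (sinh (u-h/2)^(2*N) * Dlt h αl ζl (-u) * Dlt h αr ζr (-u))) := by
  refine BInv.congr (binv_dress (Ksite_inv h αl ζl hq (List.finRange N) (List.nodup_finRange N)) (UQ_r h αr hq) ζr (h*(αr-1)/2) ?_ ?_
    (fun u => Ksite_ent h αl ζl _ _ u ?_ ?_)) ?_ ?_ ?_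
  · rw [vac, kr_ket]; congr 2; push_cast; ring
  · rw [vac, Er_ket]; simp [qnum_zero]
  · intro X hX
    rw [SetLike.mem_coe, Subalgebra.mem_centralizer_iff]
    intro Y hY
    exact (comm_lr hX (h' := h) (α' := αr) hY).symm
  · intro i hi X hX
    rw [SetLike.mem_coe, Subalgebra.mem_centralizer_iff]
    intro Y hY
    exact comm_rs (h := h) (α := αr) hY hX
  · funext u
    simp only [Tmon, Tmonhat, Ksite, mul_one, R0Vr_eq, RVr0_eq, mul_assoc]
  · funext u; simp only [List.length_finRange, Dlt]; ring
  · funext u; rw [Dlt_neg h αr]; simp only [List.length_finRange]; ring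
end fin

/-- Algebraic Bethe ansatz for the two-boundary transfer matrix: if the Bethe
roots `v_1, …, v_M` are generic and satisfy the Bethe ansatz equations, then the Bethe vector
`B(v_1) ⋯ B(v_M)|⇑⟩` is an eigenvector of `t_{2b}(u)` with the standard eigenvalue `Λ(u)`. -/
theorem two_boundary_algebraic_bethe_ansatz (N : ℕ) (hN : 1 ≤ N)
    (h αl αr ζl ζr : ℂ) (hq : Complex.exp h ^ 2 ≠ 1)
    (hαl : Complex.exp (h * αl) ≠ Complex.exp (-(h * αl)))
    (hαr : Complex.exp (h * αr) ≠ Complex.exp (-(h * αr)))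
    (M : ℕ) (v : Fin M → ℂ)
    (hgen1 : ∀ m : Fin M, Complex.sinh (2 * v m) ≠ 0 ∧
      Complex.sinh (2 * v m + h) ≠ 0 ∧ Complex.sinh (2 * v m - h) ≠ 0)
    (hgen2 : ∀ m k : Fin M, m ≠ k →
      Complex.sinh (v m - v k) ≠ 0 ∧ Complex.sinh (v m + v k) ≠ 0 ∧
      Complex.sinh (v m - v k + h) ≠ 0 ∧ Complex.sinh (v m - v k - h) ≠ 0 ∧
      Complex.sinh (v m + v k + h) ≠ 0 ∧ Complex.sinh (v m + v k - h) ≠ 0)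
    (hBAE : ∀ m : Fin M,
      Complex.sinh (v m + h / 2) ^ (2 * N) * Dlt h αl ζl (v m) * Dlt h αr ζr (v m) *
          ∏ k ∈ Finset.univ.erase m,
            (Complex.sinh (v m - v k - h) * Complex.sinh (v m + v k - h))
        = Complex.sinh (v m - h / 2) ^ (2 * N) * Dlt h αl ζl (-v m) * Dlt h αr ζr (-v m) *
            ∏ k ∈ Finset.univ.erase m,
              (Complex.sinh (v m - v k + h) * Complex.sinh (v m + v k + h))) :
    ∀ u : ℂ, Complex.sinh (2 * u) ≠ 0 →
      (∀ m : Fin M, Complex.sinh (u - v m) ≠ 0 ∧ Complex.sinh (u + v m) ≠ 0) →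
      t2b N h αl αr ζl ζr u (betheVec N h αl αr ζl ζr v)
        = (Complex.sinh (u + h / 2) ^ (2 * N) * Dlt h αl ζl u * Dlt h αr ζr u *
              (Complex.sinh (2 * u + h) / Complex.sinh (2 * u)) *
              ∏ m : Fin M,
                (Complex.sinh (u - v m - h) * Complex.sinh (u + v m - h) /
                  (Complex.sinh (u - v m) * Complex.sinh (u + v m)))
            + Complex.sinh (u - h / 2) ^ (2 * N) * Dlt h αl ζl (-u) * Dlt h αr ζr (-u) *
              (Complex.sinh (2 * u - h) / Complex.sinh (2 * u)) *
              ∏ m : Fin M,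
                (Complex.sinh (u - v m + h) * Complex.sinh (u + v m + h) /
                  (Complex.sinh (u - v m) * Complex.sinh (u + v m)))) •
            betheVec N h αl αr ζl ζr v := by
  intro u hu huv
  have I := Tcal_inv (N := N) h αl αr ζl ζr hq
  have cD : ∀ α ζ, Continuous (fun u => Dlt h α ζ u) := by
    intro α ζ; unfold Dlt; fun_prop
  have := eig I
    (((by fun_prop : Continuous fun u : ℂ => sinh (u+h/2)^(2*N)).mul (cD αl ζl)).mul (cD αr ζr))
    (((by fun_prop : Continuous fun u : ℂ => sinh (u-h/2)^(2*N)).mul ((cD αl ζl).comp continuous_neg)).mul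
      ((cD αr ζr).comp continuous_neg))
    M v (fun m => (hgen1 m).1)
    (fun m k hmk => ⟨(hgen1 m).1, (hgen1 k).1, (hgen2 m k hmk).1, (hgen2 m k hmk).2.1, (hgen2 m k hmk).2.2.1, (hgen2 m k hmk).2.2.2.2.2⟩)
    hBAE (betheVec N h αl αr ζl ζr v) rfl u hu huv
  exact this
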